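/- arXiv:2411.06745 — 9 statements merged into one kernel-verified Lean document; each statement's English description precedes it below -/
import Mathlib

section
/- Let K be a field of characteristic not equal to 2, c ∈ K, f(z) = z² + c, let y be an element of a fixed algebraic closure of K, and let m ≥ 1 be an integer. Suppose α_1, …, α_{2^{m−1}} are elements of the algebraic closure such that the multiset of roots of f^m(z) − y, counted with multiplicity, is exactly {α_1, −α_1, α_2, −α_2, …, α_{2^{m−1}}, −α_{2^{m−1}}}. Then (α_1 α_2 ⋯ α_{2^{m−1}})² = f^m(0) − y if m ≥ 2, and (α_1)² = y − f(0) if m = 1. -/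
open Polynomial

/-- Let `K` be a field of characteristic `≠ 2`, `c ∈ K`, `f(z) = z² + c`,
let `y` be an element of a fixed algebraic closure of `K`, and let `m ≥ 1`. Here
`F m` is the `m`-th iterate `f^m` of `f` as a polynomial over the algebraic closure.
Suppose `α_1, …, α_{2^{m−1}}` are elements of the algebraic closure such that the
multiset of roots of `f^m(z) − y`, counted with multiplicity, is exactly
`{α_1, −α_1, …, α_{2^{m−1}}, −α_{2^{m−1}}}`. Then `(α_1 ⋯ α_{2^{m−1}})² = f^m(0) − y`
if `m ≥ 2`, and `(α_1)² = y − f(0)` if `m = 1`. -/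
theorem prod_sq_of_roots_pm (K : Type*) [Field K] (hchar : ringChar K ≠ 2) (c : K)
    (y : AlgebraicClosure K) (m : ℕ) (hm : 1 ≤ m)
    (F : ℕ → Polynomial (AlgebraicClosure K))
    (hF0 : F 0 = X)
    (hFs : ∀ n : ℕ, F (n+1) =
      (X ^ 2 + C (algebraMap K (AlgebraicClosure K) c)).comp (F n))
    (α : Fin (2^(m-1)) → AlgebraicClosure K)
    (hroots : (F m - C y).roots =
      (Finset.univ.val.map α) + (Finset.univ.val.map (fun i => -(α i)))) :
    (∏ i, α i) ^ 2 =
      if 2 ≤ m then (fun z => z ^ 2 + algebraMap K (AlgebraicClosure K) c)^[m] 0 - y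
      else y - ((fun z => z ^ 2 + algebraMap K (AlgebraicClosure K) c) 0) := by
  have key : ∀ n : ℕ, (F n).Monic ∧ (F n).natDegree = 2 ^ n ∧
      (F n).eval 0 = (fun z => z ^ 2 + algebraMap K (AlgebraicClosure K) c)^[n] 0 := by
    intro n
    induction n with
    | zero => simp [hF0, monic_X]
    | succ k ih =>
      obtain ⟨h1, h2, h3⟩ := ih
      have hd : (X ^ 2 + C (algebraMap K (AlgebraicClosure K) c)).natDegree = 2 :=
        natDegree_X_pow_add_C
      refine ⟨?_, ?_, ?_⟩
      · rw [hFs]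
        refine (monic_X_pow_add_C _ two_ne_zero).comp h1 ?_
        rw [h2]; positivity
      · rw [hFs, natDegree_comp, hd, h2]; ring
      · rw [hFs, Function.iterate_succ_apply', ← h3]; simp [eval_comp]
  obtain ⟨h1, h2, h3⟩ := key m
  have hpos : 0 < (F m).degree := by
    rw [← natDegree_pos_iff_degree_pos, h2]; positivity
  have hlt : (C y).degree < (F m).degree := lt_of_le_of_lt degree_C_le hpos
  have hmon : (F m - C y).Monic := h1.sub_of_left hlt
  have hdeg : (F m - C y).natDegree = 2 ^ m := by rw [natDegree_sub_C, h2]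
  have hc := (IsAlgClosed.splits (F m - C y)).coeff_zero_eq_prod_roots_of_monic hmon
  have hev : (F m).coeff 0 = (F m).eval 0 := coeff_zero_eq_eval_zero _
  rw [hdeg, hroots, coeff_sub, coeff_C_zero, hev, h3, Multiset.prod_add] at hc
  change _ = _ * ((∏ i, α i) * ∏ i, -(α i)) at hc
  rw [Finset.prod_neg, Finset.card_univ, Fintype.card_fin] at hc
  have he : Even (2 ^ m) := (Nat.even_pow.2 ⟨even_two, by omega⟩)
  rw [he.neg_one_pow] at hc
  split_ifs with h
  · have he' : Even (2 ^ (m - 1)) := (Nat.even_pow.2 ⟨even_two, by omega⟩)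
    rw [he'.neg_one_pow] at hc
    rw [hc]; ring
  · obtain rfl : m = 1 := by omega
    have e1 : ((-1 : AlgebraicClosure K)) ^ (2 ^ (1 - 1)) = -1 := by norm_num
    rw [e1, Function.iterate_one] at hc
    linear_combination hc
end

section
/- Let x be an element of the algebraic closure of K not lying in the forward orbit {f^i(0) : i ≥ 0} of 0, and let y, −y be its two preimages under f. Set A_1 = {y} and B_1 = {−y}. For each n ≥ 2, let A_n be a subset of f^{−r}(A_{n−1}) containing exactly half of its elements and such that f^{−r}(A_{n−1}) = {±α : α ∈ A_n}, and similarly let B_n be a subset of f^{−r}(B_{n−1}) containing exactly half of its elements such that f^{−r}(B_{n−1}) = {±β : β ∈ B_n}. Then for every n ≥ 1, γ_n := (∏_{α ∈ A_n} α)/(∏_{β ∈ B_n} β) is a primitive 2^n-th root of unity. -/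
open scoped Classical

lemma pre_one {L : Type*} [Field L] [IsAlgClosed L] (h2 : (2:L) ≠ 0) (c : L) (S : Finset L)
    (hS : c ∉ S) : ∃ T : Finset L, (∀ z, z ∈ T ↔ z ^ 2 + c ∈ S) ∧ T.card = 2 * S.card ∧
      ∀ w, ∏ t ∈ T, (w - t) = ∏ s ∈ S, (w ^ 2 + c - s) := by
  have hsq : ∀ s : L, ∃ q : L, q ^ 2 = s - c := fun s => by
    obtain ⟨q, hq⟩ := IsAlgClosed.exists_pow_nat_eq (s - c) (n := 2) (by norm_num)
    exact ⟨q, hq⟩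
  choose q hq using hsq
  have hmem : ∀ s z, z ∈ ({q s, -q s} : Finset L) ↔ z ^ 2 + c = s := by
    intro s z
    have : z ^ 2 + c = s ↔ z ^ 2 = (q s) ^ 2 := by
      rw [hq]; exact eq_sub_iff_add_eq.symm
    rw [this, sq_eq_sq_iff_eq_or_eq_neg]; simp
  have hne : ∀ s ∈ S, q s ≠ -q s := by
    intro s hs h
    have h0 : 2 * q s = 0 := by linear_combination h
    have hq0 : q s = 0 := by simpa [h2] using h0
    have := hq s
    rw [hq0] at this
    have : s = c := by linear_combination -this
    exact hS (this ▸ hs)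
  have hdis : Set.PairwiseDisjoint (S : Set L) (fun s => ({q s, -q s} : Finset L)) := by
    intro s _ t _ hst
    refine Finset.disjoint_left.2 fun z hz hz' => hst ?_
    rw [hmem] at hz hz'
    exact hz.symm.trans hz'
  refine ⟨S.biUnion (fun s => {q s, -q s}), ?_, ?_, ?_⟩
  · intro z
    simp only [Finset.mem_biUnion, hmem]
    simp
  · rw [Finset.card_biUnion hdis, Finset.sum_congr rfl (fun s hs => Finset.card_pair (hne s hs))]
    simp [mul_comm]
  · intro w
    rw [Finset.prod_biUnion hdis]
    refine Finset.prod_congr rfl fun s hs => ?_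
    rw [Finset.prod_pair (hne s hs)]
    linear_combination -(hq s)

lemma pre_iter {L : Type*} [Field L] [IsAlgClosed L] (h2 : (2:L) ≠ 0) (c : L) (S : Finset L)
    (hS : ∀ i : ℕ, (fun z : L => z ^ 2 + c)^[i] 0 ∉ S) (k : ℕ) :
    ∃ T : Finset L, (∀ z, z ∈ T ↔ (fun z : L => z ^ 2 + c)^[k] z ∈ S) ∧ T.card = 2 ^ k * S.card ∧
      ∀ w, ∏ t ∈ T, (w - t) = ∏ s ∈ S, ((fun z : L => z ^ 2 + c)^[k] w - s) := by
  induction k with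
  | zero => exact ⟨S, by simp, by simp, by simp⟩
  | succ k ih =>
    obtain ⟨T, hT, hc, hp⟩ := ih
    obtain ⟨U, hU, hUc, hUp⟩ := pre_one h2 c T (by
      rw [hT]
      have := hS (k + 1)
      rw [Function.iterate_succ_apply] at this
      simpa using this)
    refine ⟨U, ?_, ?_, ?_⟩
    · intro z
      rw [hU, hT, Function.iterate_succ_apply]
    · rw [hUc, hc]; ring
    · intro w
      rw [hUp, hp]
      simp only [Function.iterate_succ_apply]

lemma step {L : Type*} [Field L] [IsAlgClosed L] (h2 : (2:L) ≠ 0) (c : L) (r : ℕ)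
    (hper : (fun z : L => z ^ 2 + c)^[r] 0 = 0) (S A : Finset L)
    (hS : ∀ i : ℕ, (fun z : L => z ^ 2 + c)^[i] 0 ∉ S)
    (hpre : {z : L | (fun z => z ^ 2 + c)^[r] z ∈ (S : Set L)}
        = ((A ∪ A.image (fun a => -a) : Finset L) : Set L))
    (hhalf : (A ∪ A.image (fun a => -a)).card = 2 * A.card) :
    (∀ i : ℕ, (fun z : L => z ^ 2 + c)^[i] 0 ∉ A) ∧ 2 * A.card = 2 ^ r * S.card ∧
      (-1) ^ A.card * (∏ a ∈ A, a) ^ 2 = (-1) ^ S.card * ∏ s ∈ S, s := by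
  have hmem : ∀ z, z ∈ A ∪ A.image (fun a => -a) ↔ (fun z : L => z ^ 2 + c)^[r] z ∈ S := by
    intro z
    have := Set.ext_iff.1 hpre z
    rw [Finset.mem_coe] at this
    exact this.symm
  obtain ⟨T, hT, hc, hp⟩ := pre_iter h2 c S hS r
  have hTA : T = A ∪ A.image (fun a => -a) := by
    ext z; rw [hT, hmem]
  have hinj : Function.Injective (fun a : L => -a) := neg_injective
  have hdis : Disjoint A (A.image (fun a => -a)) := by
    rw [← Finset.card_union_eq_card_add_card, hhalf, Finset.card_image_of_injective _ hinj]
    ring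
  refine ⟨?_, ?_, ?_⟩
  · intro i hi
    have := (hmem _).1 (Finset.mem_union_left _ hi)
    rw [← Function.iterate_add_apply] at this
    exact hS _ this
  · rw [← hhalf, ← hTA, hc]
  · have h := hp 0
    rw [hper, hTA, Finset.prod_union hdis, Finset.prod_image hinj.injOn] at h
    have hneg : ∀ U : Finset L, ∏ u ∈ U, (-u) = (-1) ^ U.card * ∏ u ∈ U, u := by
      intro U
      rw [← Finset.prod_const, ← Finset.prod_mul_distrib]
      exact Finset.prod_congr rfl fun u _ => by ring
    simp only [zero_sub, neg_neg] at h
    rw [hneg, hneg] at h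
    rw [← h]; ring

/-- `K` a field of characteristic `≠ 2`, `f(z) = z² + c ∈ K[z]` with
`f^r(0) = 0` for a minimal integer `r ≥ 1`. Let `x` in the algebraic closure not lie in
the forward orbit of `0`, and let `y, −y` be its two preimages under `f`. Set
`A 1 = {y}`, `B 1 = {−y}`, and for `n ≥ 2` let `A n` be a subset of `f^{−r}(A (n−1))`
containing exactly half of its elements with `f^{−r}(A (n−1)) = {±α : α ∈ A n}`, and
similarly for `B n`. Then for every `n ≥ 1`,
`γ_n := (∏_{α ∈ A n} α)/(∏_{β ∈ B n} β)` is a primitive `2^n`-th root of unity. -/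
theorem gamma_primitive_root (K : Type*) [Field K] (hchar : ringChar K ≠ 2) (c : K)
    (r : ℕ) (hr : 1 ≤ r)
    (hper : (fun z : K => z ^ 2 + c)^[r] 0 = 0)
    (hmin : ∀ j : ℕ, 1 ≤ j → j < r → (fun z : K => z ^ 2 + c)^[j] 0 ≠ 0)
    (x y : AlgebraicClosure K)
    (hx : ∀ i : ℕ, (fun z => z ^ 2 + algebraMap K (AlgebraicClosure K) c)^[i] 0 ≠ x)
    (hy : y ^ 2 + algebraMap K (AlgebraicClosure K) c = x)
    (A B : ℕ → Finset (AlgebraicClosure K))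
    (hA1 : A 1 = {y}) (hB1 : B 1 = {-y})
    (hApre : ∀ n : ℕ, 2 ≤ n →
      {z : AlgebraicClosure K |
          (fun z => z ^ 2 + algebraMap K (AlgebraicClosure K) c)^[r] z ∈ (A (n-1) : Set (AlgebraicClosure K))}
        = ((A n ∪ (A n).image (fun a => -a) : Finset (AlgebraicClosure K)) : Set (AlgebraicClosure K)))
    (hAhalf : ∀ n : ℕ, 2 ≤ n →
      (A n ∪ (A n).image (fun a => -a)).card = 2 * (A n).card)
    (hBpre : ∀ n : ℕ, 2 ≤ n →
      {z : AlgebraicClosure K |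
          (fun z => z ^ 2 + algebraMap K (AlgebraicClosure K) c)^[r] z ∈ (B (n-1) : Set (AlgebraicClosure K))}
        = ((B n ∪ (B n).image (fun b => -b) : Finset (AlgebraicClosure K)) : Set (AlgebraicClosure K)))
    (hBhalf : ∀ n : ℕ, 2 ≤ n →
      (B n ∪ (B n).image (fun b => -b)).card = 2 * (B n).card)
    (n : ℕ) (hn : 1 ≤ n) :
    IsPrimitiveRoot ((∏ a ∈ A n, a) / (∏ b ∈ B n, b)) (2 ^ n) := by
  set C : AlgebraicClosure K := algebraMap K (AlgebraicClosure K) c with hC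
  have h2K : (2 : K) ≠ 0 := Ring.two_ne_zero hchar
  have h2 : (2 : AlgebraicClosure K) ≠ 0 := by
    intro h
    apply h2K
    apply (algebraMap K (AlgebraicClosure K)).injective
    rw [map_ofNat, map_zero, h]
  have hit : ∀ (k : ℕ) (z : K), algebraMap K (AlgebraicClosure K) ((fun z : K => z ^ 2 + c)^[k] z)
      = (fun z : AlgebraicClosure K => z ^ 2 + C)^[k] (algebraMap K (AlgebraicClosure K) z) := by
    intro k z
    have hs : Function.Semiconj (algebraMap K (AlgebraicClosure K)) (fun z : K => z ^ 2 + c)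
        (fun z : AlgebraicClosure K => z ^ 2 + C) := by
      intro z; simp [hC]
    exact (hs.iterate_right k) z
  have hperL : (fun z : AlgebraicClosure K => z ^ 2 + C)^[r] 0 = 0 := by
    have := hit r 0
    rw [hper, map_zero] at this
    exact this.symm
  have key : ∀ n, 1 ≤ n → (∀ i : ℕ, (fun z : AlgebraicClosure K => z ^ 2 + C)^[i] 0 ∉ A n) ∧
      (∀ i : ℕ, (fun z : AlgebraicClosure K => z ^ 2 + C)^[i] 0 ∉ B n) ∧ (A n).card = (B n).card ∧
      ((∏ a ∈ A n, a) / (∏ b ∈ B n, b)) ^ (2 ^ (n - 1)) = -1 := by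
    intro n hn
    induction n, hn using Nat.le_induction with
    | base =>
      have ho : ∀ w : AlgebraicClosure K, w ^ 2 + C = x → ∀ i : ℕ, (fun z : AlgebraicClosure K => z ^ 2 + C)^[i] 0 ≠ w := by
        intro w hw i hi
        apply hx (i + 1)
        rw [Function.iterate_succ_apply']
        simp only [hi]
        exact hw
      have hyo := ho y hy
      have hy0 : y ≠ 0 := fun h => hyo 0 (by simp [h])
      refine ⟨?_, ?_, ?_, ?_⟩
      · intro i; rw [hA1, Finset.mem_singleton]; exact hyo i
      · intro i; rw [hB1, Finset.mem_singleton]; exact ho (-y) (by rw [neg_sq]; exact hy) i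
      · simp [hA1, hB1]
      · simp [hA1, hB1, div_neg, hy0]
    | succ n hn ih =>
      obtain ⟨ha, hb, hcard, hpow⟩ := ih
      have hAp := hApre (n + 1) (by omega)
      have hBp := hBpre (n + 1) (by omega)
      rw [Nat.add_sub_cancel] at hAp hBp
      obtain ⟨ha', hca, hpa⟩ := step h2 C r hperL _ _ ha hAp (hAhalf (n + 1) (by omega))
      obtain ⟨hb', hcb, hpb⟩ := step h2 C r hperL _ _ hb hBp (hBhalf (n + 1) (by omega))
      have hcard' : (A (n + 1)).card = (B (n + 1)).card := by
        rw [hcard] at hca; omega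
      refine ⟨ha', hb', hcard', ?_⟩
      have hsq : ((∏ a ∈ A (n + 1), a) / (∏ b ∈ B (n + 1), b)) ^ 2
          = (∏ a ∈ A n, a) / (∏ b ∈ B n, b) := by
        have hu : ∀ m : ℕ, ((-1 : AlgebraicClosure K)) ^ m ≠ 0 := fun m => pow_ne_zero _ (by simp)
        rw [div_pow, ← mul_div_mul_left _ _ (hu (A (n + 1)).card), hpa, hcard', hpb, hcard,
          mul_div_mul_left _ _ (hu _)]
      have he : 2 ^ (n + 1 - 1) = 2 * 2 ^ (n - 1) := by
        rw [← pow_succ']; congr 1; omega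
      rw [he, pow_mul, hsq, hpow]
  obtain ⟨-, -, -, hpow⟩ := key n hn
  obtain ⟨m, rfl⟩ : ∃ m, n = m + 1 := ⟨n - 1, by omega⟩
  rw [Nat.add_sub_cancel] at hpow
  have hne : (-1 : AlgebraicClosure K) ≠ 1 := by
    intro h; apply h2; linear_combination -h
  rw [IsPrimitiveRoot.iff_orderOf]
  apply orderOf_eq_prime_pow
  · rw [hpow]; exact hne
  · rw [pow_succ, pow_mul, hpow]; norm_num
end

section
/- Let x_0 ∈ K not lie in the forward orbit {f^i(0) : i ≥ 0} of 0, and fix a sequence ζ_2 = −1, ζ_4, ζ_8, … where each ζ_{2^n} is a primitive 2^n-th root of unity in the algebraic closure and ζ_{2^n}² = ζ_{2^{n−1}}. Then there exists a labeling ℓ of the binary rooted tree of iterated preimages of x_0 — that is, a map ℓ from finite words over {a,b} to the algebraic closure with ℓ(empty word) = x_0, f(ℓ(wa)) = f(ℓ(wb)) = ℓ(w), and ℓ(wa) = −ℓ(wb) for every word w — such that for every word x and every integer i ≥ 1: (∏_{w ∈ W(r,i)} ℓ(xawa)) / (∏_{w ∈ W(r,i)} ℓ(xbwa)) = ζ_{2^{i+1}}.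 -/
/-- `W(r,i)`: the words `s₁ ⋯ s_{ri−1}` of length `r*i − 1` over `{a,b}` (encoded with
`a = false`, `b = true`) with `s_j = a` whenever `r ∣ j`. -/
noncomputable def Wset (r i : ℕ) : Finset (List Bool) :=
  ((Finset.univ : Finset (Fin (r*i-1) → Bool)).filter
    (fun s => ∀ j : Fin (r*i-1), r ∣ (j:ℕ)+1 → s j = false)).image List.ofFn

namespace Lab

/-- critical orbit -/
def orb {L : Type*} [Field L] (c : L) : ℕ → L
  | 0 => 0
  | n + 1 => orb c n ^ 2 + c

/-- sign for the recursion -/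
def dsg (L : Type*) [Field L] (r n : ℕ) : L := if 2 ≤ r ∧ n ≤ 1 then -1 else 1

/-- sign for the first values -/
def esg (L : Type*) [Field L] (k : ℕ) : L := if k = 1 then -1 else 1

lemma dsg_sq (L : Type*) [Field L] (r n : ℕ) : dsg L r n * dsg L r n = 1 := by
  unfold dsg; split_ifs <;> simp

lemma esg_sq (L : Type*) [Field L] (k : ℕ) : esg L k * esg L k = 1 := by
  unfold esg; split_ifs <;> simp

/-- compatible states -/
structure Comp {L : Type*} [Field L] (c : L) (r : ℕ) (p : ℕ → L) : Prop where
  low : ∀ k, 1 ≤ k → k < r → p k ^ 2 = esg L k * (orb c k - p 0)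
  high : ∀ n, p (n + r) ^ 2 = dsg L r n * p n
  nonorb : ∀ n, orb c n ≠ p 0

/-- some square root -/
noncomputable def sq {L : Type*} [Field L] [IsAlgClosed L] (x : L) : L :=
  Classical.choose (IsAlgClosed.exists_pow_nat_eq x (n := 2) (by norm_num))

lemma sq_spec {L : Type*} [Field L] [IsAlgClosed L] (x : L) : sq x ^ 2 = x :=
  Classical.choose_spec (IsAlgClosed.exists_pow_nat_eq x (n := 2) (by norm_num))

/-- a compatible state above `y` -/
noncomputable def gen {L : Type*} [Field L] [IsAlgClosed L] (c : L) (r : ℕ) (y : L) (n : ℕ) : L :=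
  if n = 0 then y else
  if _h : n < r ∨ r = 0 then sq (esg L n * (orb c n - y))
  else sq (dsg L r (n - r) * gen c r y (n - r))
termination_by n
decreasing_by omega

lemma exists_comp {L : Type*} [Field L] [IsAlgClosed L] (c : L) (r : ℕ) (hr : 1 ≤ r) (y : L)
    (hy : ∀ n, orb c n ≠ y) : ∃ p : ℕ → L, p 0 = y ∧ Comp c r p := by
  have h0 : gen c r y 0 = y := by rw [gen]; simp
  refine ⟨gen c r y, h0, ?_, ?_, ?_⟩
  · intro k hk hkr
    rw [h0, gen, if_neg (by omega), dif_pos (Or.inl hkr), sq_spec]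
  · intro n
    rw [gen, if_neg (by omega), dif_neg (by omega), sq_spec, Nat.add_sub_cancel]
  · rw [h0]; exact hy

lemma Comp.ne_zero {L : Type*} [Field L] {c : L} {r : ℕ} (hr : 1 ≤ r) {p : ℕ → L}
    (h : Comp c r p) (n : ℕ) : p n ≠ 0 := by
  induction n using Nat.strong_induction_on with
  | _ n ih =>
    rcases Nat.eq_zero_or_pos n with rfl | hn
    · exact fun h0 => h.nonorb 0 (by rw [h0]; rfl)
    · intro h0
      by_cases hnr : n < r
      · have := h.low n hn hnr
        rw [h0] at this
        have h1 : esg L n ≠ 0 := fun h1 => by have := esg_sq L n; simp [h1] at this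
        have h2 : orb c n - p 0 ≠ 0 := sub_ne_zero.2 (h.nonorb n)
        exact mul_ne_zero h1 h2 (by rw [← this]; simp)
      · have := h.high (n - r)
        rw [Nat.sub_add_cancel (by omega), h0] at this
        have h1 : dsg L r (n - r) ≠ 0 := fun h1 => by
          have := dsg_sq L r (n - r); simp [h1] at this
        exact mul_ne_zero h1 (ih (n - r) (by omega)) (by rw [← this]; simp)

lemma step {L : Type*} [Field L] [IsAlgClosed L] (c : L) (r : ℕ) (hr : 1 ≤ r)
    (hper : orb c r = 0) (ζ : ℕ → L) (hζ1 : ζ 1 = -1) (hζ0 : ∀ n, 1 ≤ n → ζ n ≠ 0)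
    (hζsq : ∀ n, 1 ≤ n → ζ (n + 1) ^ 2 = ζ n) (p : ℕ → L) (hp : Comp c r p) :
    ∃ pa pb : ℕ → L, Comp c r pa ∧ Comp c r pb ∧ pa 0 = - pb 0 ∧ pa 0 ^ 2 + c = p 0 ∧
      (∀ n, p (n + 1) = if r ∣ n then pa n else pa n * pb n) ∧
      (∀ i, pa (r * i) = ζ (i + 1) * pb (r * i)) := by
  have hz : p 1 ^ 2 + c = p 0 := by
    rcases Nat.lt_or_ge 1 r with h | h
    · have := hp.low 1 le_rfl h
      simp [esg, orb] at this
      rw [this]; ring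
    · obtain rfl : r = 1 := by omega
      have := hp.high 0
      simp [dsg] at this
      simp [orb] at hper
      rw [this, hper, add_zero]
  have hzo : ∀ n, orb c n ≠ p 1 := fun n hn => hp.nonorb (n + 1) (by rw [← hz, ← hn]; rfl)
  have hzo' : ∀ n, orb c n ≠ -p 1 := fun n hn =>
    hp.nonorb (n + 1) (by rw [← hz, ← neg_sq, ← hn]; rfl)
  obtain ⟨q, hq0, hq⟩ := exists_comp c r hr (-p 1) hzo'
  have hqn := hq.ne_zero hr
  have hd0 : ∀ n, r ∣ n → dsg L r (n + 1) = dsg L r n := by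
    intro n hn
    unfold dsg
    rcases Nat.eq_zero_or_pos n with rfl | h
    · simp
    · have := Nat.le_of_dvd h hn
      rw [if_neg (by omega), if_neg (by omega)]
  have hd1 : ∀ n, ¬ r ∣ n → dsg L r (n + 1) = 1 := by
    intro n hn
    have : n ≠ 0 := by rintro rfl; simp at hn
    unfold dsg
    rw [if_neg (by omega)]
  have hdv : ∀ n, r ∣ n + r ↔ r ∣ n := fun n => by simp
  have hlow : ∀ k, 1 ≤ k → k < r → p (k + 1) ^ 2 = (orb c k - p 1) * (orb c k + p 1) := by
    intro k hk hkr
    have h1 : p (k + 1) ^ 2 = orb c (k + 1) - p 0 := by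
      rcases Nat.lt_or_ge (k + 1) r with h | h
      · have := hp.low (k + 1) (by omega) h
        rw [this, esg, if_neg (by omega), one_mul]
      · obtain rfl : r = k + 1 := by omega
        have := hp.high 0
        rw [zero_add, dsg, if_pos (by omega)] at this
        rw [this, hper]; ring
    rw [h1, ← hz, orb]; ring
  refine ⟨fun n => if r ∣ n then p (n + 1) else p (n + 1) / q n,
    fun n => if r ∣ n then p (n + 1) / ζ (n / r + 1) else q n, ⟨?_, ?_, ?_⟩, ⟨?_, ?_, ?_⟩,
    ?_, ?_, ?_, ?_⟩
  · intro k hk hkr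
    have hk' : ¬ r ∣ k := Nat.not_dvd_of_pos_of_lt hk hkr
    have h2 := hq.low k hk hkr
    rw [hq0, sub_neg_eq_add] at h2
    have h3 : orb c k + p 1 ≠ 0 := fun h => hzo' k (eq_neg_of_add_eq_zero_left h)
    simp only [hk', if_false, dvd_zero, if_true, zero_add]
    rw [div_pow, hlow k hk hkr, div_eq_iff (pow_ne_zero _ (hqn k)), h2]
    linear_combination (-(orb c k - p 1) * (orb c k + p 1)) * esg_sq L k
  · intro n
    by_cases h : r ∣ n
    · simp only [hdv, h, if_true]
      rw [← hd0 n h, ← hp.high (n + 1)]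
      congr 2; omega
    · simp only [hdv, h, if_false]
      have h1 := hp.high (n + 1)
      rw [hd1 n h, one_mul, show n + 1 + r = n + r + 1 by omega] at h1
      have h2 := hq.high n
      rw [div_pow, h1, div_eq_iff (pow_ne_zero _ (hqn _)), h2]
      have := dsg_sq L r n
      have h3 := hqn n
      field_simp
      linear_combination (-(p (n + 1))) * this
  · simpa using hzo
  · intro k hk hkr
    have hk' : ¬ r ∣ k := Nat.not_dvd_of_pos_of_lt hk hkr
    have h2 := hq.low k hk hkr
    simp only [hk', if_false, dvd_zero, if_true, zero_add, Nat.zero_div, hζ1]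
    rw [h2, hq0, div_neg, div_one]
  · intro n
    by_cases h : r ∣ n
    · simp only [hdv, h, if_true]
      have h1 := hp.high (n + 1)
      rw [hd0 n h, show n + 1 + r = n + r + 1 by omega] at h1
      rw [Nat.add_div_right n (by omega), div_pow, h1, hζsq (n / r + 1) (Nat.le_add_left 1 _)]
      rw [mul_div_assoc]
    · simp only [hdv, h, if_false]
      exact hq.high n
  · simpa [hζ1, div_neg] using hzo'
  · simp [hζ1, div_neg]
  · simpa using hz
  · intro n
    by_cases h : r ∣ n
    · simp [h]
    · simp only [h, if_false]
      rw [div_mul_cancel₀ _ (hqn n)]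
  · intro i
    simp only [dvd_mul_right, if_true]
    rw [Nat.mul_div_cancel_left _ (by omega), mul_div_cancel₀ _ (hζ0 _ (by omega))]

lemma prod_words {L : Type*} [Field L] (r : ℕ) (P : List Bool → ℕ → L)
    (hP : ∀ v n, P v (n + 1) = if r ∣ n then P (v ++ [false]) n
      else P (v ++ [false]) n * P (v ++ [true]) n) (m : ℕ) :
    ∀ v, (∏ s : Fin m → Bool, if (∀ j : Fin m, r ∣ m - j → s j = false)
      then P (v ++ List.ofFn s ++ [false]) 0 else 1) = P v (m + 1) := by
  classical
  induction m with
  | zero => intro v; simp [hP]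
  | succ m ih =>
    intro v
    rw [← (Fin.consEquiv (fun _ : Fin (m + 1) => Bool)).prod_comp, Fintype.prod_prod_type]
    rw [hP v (m + 1), ← ih, ← ih]
    simp only [Fin.consEquiv_apply, Fin.forall_fin_succ, Fin.cons_zero, Fin.cons_succ,
      List.ofFn_succ, Fintype.prod_bool, Fin.val_zero, Fin.val_succ, Nat.sub_zero,
      Nat.add_sub_add_right]
    by_cases h : r ∣ m + 1
    · simp [h]
    · simp [h, mul_comm]

lemma prod_Wset {L : Type*} [Field L] (r : ℕ) (hr : 1 ≤ r) (P : List Bool → ℕ → L)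
    (hP : ∀ v n, P v (n + 1) = if r ∣ n then P (v ++ [false]) n
      else P (v ++ [false]) n * P (v ++ [true]) n) (i : ℕ) (hi : 1 ≤ i) (v : List Bool) :
    ∏ w ∈ Wset r i, P (v ++ w ++ [false]) 0 = P v (r * i) := by
  have hri : 1 ≤ r * i := Nat.mul_pos hr hi
  have key := prod_words r P hP (r * i - 1) v
  rw [Nat.sub_add_cancel hri] at key
  rw [← key, Wset, Finset.prod_image (fun a _ b _ h => List.ofFn_injective h),
    Finset.prod_filter]
  refine Finset.prod_congr rfl fun s _ => ?_
  have : (∀ j : Fin (r * i - 1), r ∣ (j : ℕ) + 1 → s j = false) ↔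
      (∀ j : Fin (r * i - 1), r ∣ r * i - 1 - j → s j = false) := by
    refine forall_congr' fun j => ?_
    have hj := j.2
    have e : r * i = (r * i - 1 - j) + ((j : ℕ) + 1) := by omega
    have h1 : r ∣ (r * i - 1 - j) + ((j : ℕ) + 1) := e ▸ dvd_mul_right r i
    have h2 : r ∣ (j : ℕ) + 1 ↔ r ∣ r * i - 1 - j :=
      ⟨fun h => (Nat.dvd_add_left h).1 h1, fun h => (Nat.dvd_add_right h).1 h1⟩
    rw [h2]
  simp only [this]

end Lab

/-- `K` a field of characteristic `≠ 2`, `f(z) = z² + c ∈ K[z]` with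
`f^r(0) = 0` for a minimal `r ≥ 1`. Let `x₀ ∈ K` not lie in the forward orbit of `0`,
and fix a sequence `ζ 1 = −1, ζ 2, ζ 3, …` where `ζ n` is a primitive `2^n`-th root of
unity and `(ζ n)² = ζ (n−1)`. Then there is a labeling `ℓ` of the binary rooted tree of
iterated preimages of `x₀` — a map from finite words over `{a,b}` (with `a = false`,
`b = true`) to the algebraic closure with `ℓ(∅) = x₀`, `f(ℓ(wa)) = f(ℓ(wb)) = ℓ(w)`,
and `ℓ(wa) = −ℓ(wb)` — such that for every word `x` and every `i ≥ 1`: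
`(∏_{w ∈ W(r,i)} ℓ(xawa)) / (∏_{w ∈ W(r,i)} ℓ(xbwa)) = ζ (i+1)`. -/
theorem exists_labeling (K : Type*) [Field K] (hchar : ringChar K ≠ 2) (c : K)
    (r : ℕ) (hr : 1 ≤ r)
    (hper : (fun z : K => z ^ 2 + c)^[r] 0 = 0)
    (hmin : ∀ j : ℕ, 1 ≤ j → j < r → (fun z : K => z ^ 2 + c)^[j] 0 ≠ 0)
    (x₀ : K)
    (hx₀ : ∀ i : ℕ, (fun z : K => z ^ 2 + c)^[i] 0 ≠ x₀)
    (ζ : ℕ → AlgebraicClosure K)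
    (hζ1 : ζ 1 = -1)
    (hζprim : ∀ n : ℕ, 1 ≤ n → IsPrimitiveRoot (ζ n) (2 ^ n))
    (hζsq : ∀ n : ℕ, 2 ≤ n → (ζ n) ^ 2 = ζ (n-1)) :
    ∃ ℓ : List Bool → AlgebraicClosure K,
      ℓ [] = algebraMap K (AlgebraicClosure K) x₀ ∧
      (∀ (w : List Bool) (s : Bool),
        (ℓ (w ++ [s])) ^ 2 + algebraMap K (AlgebraicClosure K) c = ℓ w) ∧
      (∀ w : List Bool, ℓ (w ++ [false]) = - ℓ (w ++ [true])) ∧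
      (∀ (x : List Bool) (i : ℕ), 1 ≤ i →
        (∏ w ∈ Wset r i, ℓ (x ++ [false] ++ w ++ [false])) /
          (∏ w ∈ Wset r i, ℓ (x ++ [true] ++ w ++ [false])) = ζ (i+1)) := by
  classical
  set c' := algebraMap K (AlgebraicClosure K) c with hc'
  have horb : ∀ n, Lab.orb c' n =
      algebraMap K (AlgebraicClosure K) ((fun z : K => z ^ 2 + c)^[n] 0) := by
    intro n
    induction n with
    | zero => simp [Lab.orb]
    | succ n ih => rw [Function.iterate_succ_apply', Lab.orb, ih]; simp [hc']
  have hper' : Lab.orb c' r = 0 := by rw [horb, hper, map_zero]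
  have hζ0 : ∀ n, 1 ≤ n → ζ n ≠ 0 := fun n hn => (hζprim n hn).ne_zero (by positivity)
  have hζsq' : ∀ n, 1 ≤ n → ζ (n + 1) ^ 2 = ζ n := fun n hn => hζsq (n + 1) (by omega)
  obtain ⟨p₀, hp₀, hC⟩ := Lab.exists_comp c' r hr (algebraMap K (AlgebraicClosure K) x₀)
    (fun n h => hx₀ n ((algebraMap K (AlgebraicClosure K)).injective (by rw [← horb, h])))
  have hstep := fun p : {p : ℕ → AlgebraicClosure K // Lab.Comp c' r p} =>
    Lab.step c' r hr hper' ζ hζ1 hζ0 hζsq' p.1 p.2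
  choose A B hA hB hAB hsq hrel hrat using hstep
  let S : List Bool → {p : ℕ → AlgebraicClosure K // Lab.Comp c' r p} := fun w =>
    w.foldl (fun p s => if s then ⟨B p, hB p⟩ else ⟨A p, hA p⟩) ⟨p₀, hC⟩
  have hSf : ∀ w, (S (w ++ [false])).1 = A (S w) := fun w => by simp [S]
  have hSt : ∀ w, (S (w ++ [true])).1 = B (S w) := fun w => by simp [S]
  have hW := Lab.prod_Wset r hr (fun w n => (S w).1 n) (by
    intro v n
    simp only [hSf, hSt]
    exact hrel (S v) n)
  refine ⟨fun w => (S w).1 0, hp₀, ?_, ?_, ?_⟩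
  · intro w s
    cases s
    · simp only [hSf]; exact hsq _
    · simp only [hSt]; rw [← hsq (S w), hAB, neg_sq]
  · intro w
    simp only [hSf, hSt]; exact hAB _
  · intro x i hi
    rw [hW i hi, hW i hi]
    simp only [hSf, hSt]
    rw [hrat, mul_div_assoc, div_self, mul_one]
    exact (hB (S x)).ne_zero hr _
end

section
/- For every integer r ≥ 1, M_{r,∞} is a subgroup of Aut(T_∞): it contains the identity automorphism and is closed under composition and inversion. -/
/-- Nodes of the infinite binary rooted tree `T_∞` are finite words over `{a,b}`,
encoded as `List Bool` with `a = false` and `b = true`; children of `w` are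
`w ++ [false]` and `w ++ [true]`. An automorphism of `T_∞`. -/
def IsTreeAut (σ : List Bool → List Bool) : Prop :=
  Function.Bijective σ ∧ (∀ w, (σ w).length = w.length) ∧
    ∀ w s, ∃ t, σ (w ++ [s]) = σ w ++ [t]

/-- The parity `Par(σ,x) ∈ {0,1}`: `0` if `σ(xa) = σ(x)a`, and `1` otherwise. -/
def par (σ : List Bool → List Bool) (x : List Bool) : ℕ :=
  if σ (x ++ [false]) = σ x ++ [false] then 0 else 1

/-- `Q_r(σ,x) := Σ_{i≥1} 2^i Σ_{w ∈ W(r,i)} Par(σ, xw)` in `ℤ₂`. -/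
noncomputable def Qr (r : ℕ) (σ : List Bool → List Bool) (x : List Bool) : ℤ_[2] :=
  ∑' i : ℕ, (2:ℤ_[2])^(i+1) * ∑ w ∈ Wset r (i+1), (par σ (x ++ w) : ℤ_[2])

/-- `P_r(σ,x) := (−1)^{Par(σ,x)} + Q_r(σ,xb) − Q_r(σ,xa)` in `ℤ₂`. -/
noncomputable def Pr (r : ℕ) (σ : List Bool → List Bool) (x : List Bool) : ℤ_[2] :=
  (-1:ℤ_[2])^(par σ x) + Qr r σ (x ++ [true]) - Qr r σ (x ++ [false])

/-- `M_{r,∞}`: tree automorphisms for which `P_r(σ,·)` is constant. -/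
def Mset (r : ℕ) : Set (List Bool → List Bool) :=
  {σ | IsTreeAut σ ∧ ∀ x₁ x₂ : List Bool, Pr r σ x₁ = Pr r σ x₂}

/-- `B_{r,∞}`: elements of `M_{r,∞}` with common value `P_r(σ) = 1`. -/
def Bset (r : ℕ) : Set (List Bool → List Bool) :=
  {σ | σ ∈ Mset r ∧ Pr r σ [] = 1}

/-- Sum of `f` over all words extending `x` by `n` letters. -/
noncomputable def SS : ℕ → (List Bool → ℤ_[2]) → List Bool → ℤ_[2]
  | 0, f, x => f x
  | n+1, f, x => SS n f (x ++ [true]) + SS n f (x ++ [false])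

lemma SS_add (n : ℕ) (f g : List Bool → ℤ_[2]) (x : List Bool) :
    SS n (fun y => f y + g y) x = SS n f x + SS n g x := by
  induction n generalizing x with
  | zero => rfl
  | succ n ih => simp only [SS, ih]; ring

lemma SS_mul (n : ℕ) (c : ℤ_[2]) (f : List Bool → ℤ_[2]) (x : List Bool) :
    SS n (fun y => c * f y) x = c * SS n f x := by
  induction n generalizing x with
  | zero => rfl
  | succ n ih => simp only [SS, ih]; ring

lemma SS_summable_tsum (n : ℕ) (g : ℕ → List Bool → ℤ_[2]) (hg : ∀ y, Summable (fun i => g i y))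
    (x : List Bool) : Summable (fun i => SS n (g i) x) ∧
    SS n (fun y => ∑' i, g i y) x = ∑' i, SS n (g i) x := by
  induction n generalizing x with
  | zero => exact ⟨hg x, rfl⟩
  | succ n ih =>
    refine ⟨(ih _).1.add (ih _).1, ?_⟩
    simp only [SS, (ih _).2]
    exact ((ih _).1.tsum_add (ih _).1).symm

/-- basic dichotomy for a tree automorphism -/
lemma aut_cases {σ : List Bool → List Bool} (h : IsTreeAut σ) (x : List Bool) :
    (par σ x = 0 ∧ ∀ s, σ (x ++ [s]) = σ x ++ [s]) ∨
    (par σ x = 1 ∧ ∀ s, σ (x ++ [s]) = σ x ++ [!s]) := by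
  obtain ⟨⟨hi, -⟩, -, hc⟩ := h
  obtain ⟨t, ht⟩ := hc x false
  obtain ⟨t', ht'⟩ := hc x true
  have hne : t ≠ t' := by
    rintro rfl
    have := hi (ht.trans ht'.symm)
    simp at this
  unfold par
  cases t <;> cases t' <;> simp_all

lemma SS_comp {τ : List Bool → List Bool} (h : IsTreeAut τ) (n : ℕ) (f : List Bool → ℤ_[2])
    (x : List Bool) : SS n f (τ x) = SS n (fun y => f (τ y)) x := by
  induction n generalizing x with
  | zero => rfl
  | succ n ih =>
    simp only [SS, ← ih]
    rcases aut_cases h x with ⟨-, h⟩ | ⟨-, h⟩ <;> simp [h, add_comm]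

/-- Sum over words of length `n` with letter `a` forced at positions in `p`. -/
noncomputable def TT (p : ℕ → Prop) (n : ℕ) (f : List Bool → ℤ_[2]) (x : List Bool) : ℤ_[2] :=
  open Classical in
  ∑ s : Fin n → Bool, if (∀ j : Fin n, p j → s j = false) then f (x ++ List.ofFn s) else 0

lemma TT_zero (p : ℕ → Prop) (f : List Bool → ℤ_[2]) (x : List Bool) : TT p 0 f x = f x := by
  simp [TT]

lemma TT_succ (p : ℕ → Prop) (n : ℕ) (f : List Bool → ℤ_[2]) (x : List Bool) [Decidable (p 0)] :
    TT p (n+1) f x = (if p 0 then 0 else TT (fun j => p (j+1)) n f (x ++ [true]))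
      + TT (fun j => p (j+1)) n f (x ++ [false]) := by
  unfold TT
  have hs : ∀ F : (Fin (n+1) → Bool) → ℤ_[2], ∑ s, F s =
      ∑ s : Fin n → Bool, F (Fin.cons true s) + ∑ s : Fin n → Bool, F (Fin.cons false s) := by
    intro F
    rw [← (Fin.consEquiv (fun _ : Fin (n+1) => Bool)).sum_comp, Fintype.sum_prod_type,
      Fintype.sum_bool]
    rfl
  have hiff : ∀ (b : Bool) (s : Fin n → Bool),
      (∀ j : Fin (n+1), p j → (Fin.cons b s : Fin (n+1) → Bool) j = false) ↔
      ((p 0 → b = false) ∧ ∀ j : Fin n, p (j+1) → s j = false) := by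
    intro b s
    rw [Fin.forall_fin_succ]
    simp
  rw [hs]
  congr 1
  · split_ifs with h
    · refine Finset.sum_eq_zero fun s _ => if_neg ?_
      rw [hiff]
      simp [h]
    · refine Finset.sum_congr rfl fun s _ => @if_congr _ _ _ (_) (_) _ _ _ _ ?_ ?_ rfl
      · rw [hiff]; simp [h]
      · simp [List.ofFn_succ]
  · refine Finset.sum_congr rfl fun s _ => @if_congr _ _ _ (_) (_) _ _ _ _ ?_ ?_ rfl
    · rw [hiff]; simp
    · simp [List.ofFn_succ]

lemma TT_add (p : ℕ → Prop) (n m : ℕ) (f : List Bool → ℤ_[2]) (x : List Bool)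
    (hp : ∀ j < n, ¬ p j) :
    TT p (m+n) f x = SS n (TT (fun j => p (j+n)) m f) x := by
  classical
  induction n generalizing x p with
  | zero => rfl
  | succ n ih =>
    rw [← add_assoc, TT_succ, if_neg (hp 0 (by omega)), ih, ih]
    · simp only [SS, add_assoc, add_comm, add_left_comm]
    all_goals intro j hj; exact hp _ (by omega)

lemma sum_Wset (r i : ℕ) (f : List Bool → ℤ_[2]) (x : List Bool) :
    ∑ w ∈ Wset r i, f (x ++ w) = TT (fun j => r ∣ j + 1) (r*i-1) f x := by
  unfold Wset TT
  rw [Finset.sum_image (fun a _ b _ h => List.ofFn_injective h), Finset.sum_filter]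
  refine Finset.sum_congr rfl fun s _ => ?_
  congr

lemma sum_Wset_one (k : ℕ) (f : List Bool → ℤ_[2]) (x : List Bool) :
    ∑ w ∈ Wset (k+1) 1, f (x ++ w) = SS k f x := by
  rw [sum_Wset, show (k+1)*1-1 = 0 + k by omega, TT_add]
  · congr 1; funext y; rw [TT_zero]
  · intro j hj h
    have := Nat.le_of_dvd (by omega) h
    omega

lemma sum_Wset_succ (k i : ℕ) (f : List Bool → ℤ_[2]) (x : List Bool) :
    ∑ w ∈ Wset (k+1) (i+2), f (x ++ w) =
      SS k (fun y => ∑ w ∈ Wset (k+1) (i+1), f ((y ++ [false]) ++ w)) x := by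
  classical
  have e : (k+1)*(i+2)-1 = ((k+1)*(i+1)-1+1) + k := by
    have : (k+1)*(i+2) = (k+1)*(i+1) + (k+1) := by ring
    have : 0 < (k+1)*(i+1) := by positivity
    omega
  rw [sum_Wset, e, TT_add]
  · congr 1; funext y
    rw [TT_succ, if_pos (by simp), zero_add, sum_Wset]
    congr 1; funext j
    rw [show j + 1 + k + 1 = (j+1) + (k+1) by ring]
    simp
  · intro j hj h
    have := Nat.le_of_dvd (by omega) h
    omega

lemma summ (c : ℕ → ℤ_[2]) : Summable (fun i => (2:ℤ_[2])^(i+1) * c i) := by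
  refine Summable.of_norm_bounded (g := fun i => (1/2:ℝ)^i) summable_geometric_two fun i => ?_
  have h2 : ‖(2:ℤ_[2])‖ = 1/2 := by
    have := PadicInt.norm_p (p := 2)
    norm_num at this ⊢; exact this
  rw [norm_mul, norm_pow, h2, pow_succ]
  have := PadicInt.norm_le_one (c i)
  have h3 : (0:ℝ) < (1/2)^i := by positivity
  nlinarith [norm_nonneg (c i)]

lemma Qr_rec (k : ℕ) (σ : List Bool → List Bool) (x : List Bool) :
    Qr (k+1) σ x = 2 * SS k (fun y => (par σ y : ℤ_[2]) + Qr (k+1) σ (y ++ [false])) x := by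
  rw [SS_add]
  unfold Qr
  rw [(summ _).tsum_eq_zero_add, sum_Wset_one k (fun y => (par σ y : ℤ_[2])) x,
    (SS_summable_tsum k _ (fun y => summ _) x).2, mul_add,
    ← (SS_summable_tsum k _ (fun y => summ _) x).1.tsum_mul_left]
  congr 1
  · congr 1; funext i
    rw [sum_Wset_succ k i (fun y => (par σ y : ℤ_[2])) x, SS_mul]
    ring

lemma eq_zero_of_rec (k : ℕ) (D : List Bool → ℤ_[2])
    (h : ∀ x, D x = 2 * SS k (fun y => D (y ++ [false])) x) (x : List Bool) : D x = 0 := by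
  have key : ∀ n : ℕ, ∀ x, (2:ℤ_[2])^n ∣ D x := by
    intro n
    induction n with
    | zero => simp
    | succ n ih =>
      intro x
      choose E hE using ih
      rw [h x]
      simp only [hE, SS_mul]
      exact ⟨SS k (fun y => E (y ++ [false])) x, by ring⟩
  by_contra hne
  have hf := FiniteMultiplicity.of_prime_left (PadicInt.prime_p (p := 2)) hne
  exact FiniteMultiplicity.not_iff_forall.mpr (fun n => by simpa using key n x) hf

lemma aut_comp {σ τ : List Bool → List Bool} (hσ : IsTreeAut σ) (hτ : IsTreeAut τ) :
    IsTreeAut (σ ∘ τ) := by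
  refine ⟨hσ.1.comp hτ.1, fun w => by simp [hσ.2.1, hτ.2.1], fun w s => ?_⟩
  obtain ⟨t, ht⟩ := hτ.2.2 w s
  obtain ⟨u, hu⟩ := hσ.2.2 (τ w) t
  exact ⟨u, by simp [ht, hu]⟩

lemma aut_inv {σ τ : List Bool → List Bool} (hσ : IsTreeAut σ) (h1 : σ ∘ τ = id)
    (h2 : τ ∘ σ = id) : IsTreeAut τ := by
  have h1 : ∀ x, σ (τ x) = x := congrFun h1
  have h2 : ∀ x, τ (σ x) = x := congrFun h2
  refine ⟨⟨Function.LeftInverse.injective h1, Function.RightInverse.surjective h2⟩,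
    fun w => by rw [← hσ.2.1, h1], fun w s => ?_⟩
  rcases aut_cases hσ (τ w) with ⟨-, h⟩ | ⟨-, h⟩
  · exact ⟨s, by rw [← h2 (τ w ++ [s]), h, h1]⟩
  · exact ⟨!s, by rw [← h2 (τ w ++ [!s]), h, h1]; simp⟩

lemma par_comp {σ τ : List Bool → List Bool} (hσ : IsTreeAut σ) (hτ : IsTreeAut τ)
    (y : List Bool) : (par (σ ∘ τ) y : ℤ_[2]) =
      par τ y + (-1)^(par τ y) * par σ (τ y) := by
  rcases aut_cases hτ y with ⟨h, h'⟩ | ⟨h, h'⟩ <;>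
  rcases aut_cases hσ (τ y) with ⟨g, g'⟩ | ⟨g, g'⟩ <;>
  simp [h, g] <;> simp [par, h', g']

lemma Qr_comp (k : ℕ) {σ τ : List Bool → List Bool} (hσ : IsTreeAut σ) (hτ : IsTreeAut τ)
    (P : ℤ_[2]) (hP : ∀ x, Pr (k+1) σ x = P) (x : List Bool) :
    Qr (k+1) (σ ∘ τ) x = P * Qr (k+1) τ x + Qr (k+1) σ (τ x) := by
  rw [← sub_eq_zero]
  refine eq_zero_of_rec k
    (fun x => Qr (k+1) (σ ∘ τ) x - (P * Qr (k+1) τ x + Qr (k+1) σ (τ x))) (fun x => ?_) x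
  have e : ∀ y, (par (σ ∘ τ) y : ℤ_[2]) + Qr (k+1) (σ ∘ τ) (y ++ [false]) =
      (P * (par τ y + Qr (k+1) τ (y ++ [false])) +
        (par σ (τ y) + Qr (k+1) σ (τ y ++ [false]))) +
      (Qr (k+1) (σ ∘ τ) (y ++ [false]) - (P * Qr (k+1) τ (y ++ [false]) +
        Qr (k+1) σ (τ (y ++ [false])))) := by
    intro y
    rw [par_comp hσ hτ]
    rcases aut_cases hτ y with ⟨h, h'⟩ | ⟨h, h'⟩
    · simp [h, h']; ring
    · have := hP (τ y)
      unfold Pr at this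
      rw [h' false, h, ← this]
      rcases aut_cases hσ (τ y) with ⟨g, -⟩ | ⟨g, -⟩ <;> simp [g] <;> ring
  rw [Qr_rec k (σ ∘ τ) x, Qr_rec k τ x, Qr_rec k σ (τ x), SS_comp hτ]
  simp only [e]
  rw [SS_add, SS_add, SS_mul]
  ring

lemma Pr_comp (k : ℕ) {σ τ : List Bool → List Bool} (hσ : IsTreeAut σ) (hτ : IsTreeAut τ)
    (P : ℤ_[2]) (hP : ∀ x, Pr (k+1) σ x = P) (x : List Bool) :
    Pr (k+1) (σ ∘ τ) x = P * Pr (k+1) τ x := by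
  have h0 := hP (τ x)
  have hpar : ((-1)^(par (σ ∘ τ) x) : ℤ_[2]) = (-1)^(par σ (τ x)) * (-1)^(par τ x) := by
    have := par_comp hσ hτ x
    rcases aut_cases hτ x with ⟨h, -⟩ | ⟨h, -⟩ <;>
    rcases aut_cases hσ (τ x) with ⟨g, -⟩ | ⟨g, -⟩ <;>
    rcases aut_cases (aut_comp hσ hτ) x with ⟨f, -⟩ | ⟨f, -⟩ <;> simp_all
  unfold Pr at h0 ⊢
  rw [hpar, Qr_comp k hσ hτ P hP, Qr_comp k hσ hτ P hP]
  rcases aut_cases hτ x with ⟨h, h'⟩ | ⟨h, h'⟩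
  · rw [h, h', h']; linear_combination h0
  · rw [h, h', h']; simp only [Bool.not_true, Bool.not_false]; linear_combination -h0

lemma aut_id : IsTreeAut id := ⟨Function.bijective_id, fun _ => rfl, fun _ s => ⟨s, rfl⟩⟩

lemma Pr_id (r : ℕ) (x : List Bool) : Pr r id x = 1 := by
  simp [Pr, Qr, par]

/-- For every integer `r ≥ 1`, `M_{r,∞}` is a subgroup of `Aut(T_∞)`:
it contains the identity automorphism and is closed under composition and inversion. -/
theorem Mset_is_subgroup (r : ℕ) (hr : 1 ≤ r) :
    (id ∈ Mset r) ∧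
    (∀ σ τ : List Bool → List Bool, σ ∈ Mset r → τ ∈ Mset r → σ ∘ τ ∈ Mset r) ∧
    (∀ σ τ : List Bool → List Bool, σ ∈ Mset r → σ ∘ τ = id → τ ∘ σ = id → τ ∈ Mset r) := by
  obtain ⟨k, rfl⟩ : ∃ k, r = k + 1 := ⟨r - 1, by omega⟩
  refine ⟨⟨aut_id, fun x y => by rw [Pr_id, Pr_id]⟩, ?_, ?_⟩
  · rintro σ τ ⟨hσ, cσ⟩ ⟨hτ, cτ⟩
    refine ⟨aut_comp hσ hτ, fun x y => ?_⟩
    rw [Pr_comp k hσ hτ _ (fun x => cσ x []), Pr_comp k hσ hτ _ (fun x => cσ x []), cτ x y]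
  · rintro σ τ ⟨hσ, cσ⟩ h1 h2
    have hτ := aut_inv hσ h1 h2
    have key : ∀ x, 1 = Pr (k+1) σ [] * Pr (k+1) τ x := fun x => by
      rw [← Pr_comp k hσ hτ _ (fun x => cσ x []), h1, Pr_id]
    refine ⟨hτ, fun x y => ?_⟩
    have hne : Pr (k+1) σ [] ≠ 0 := by
      intro h
      have := key x
      simp [h] at this
    exact mul_left_cancel₀ hne ((key x).symm.trans (key y))
end

section
/- Let x_0 ∈ K not lie in the forward orbit {f^i(0) : i ≥ 0} of 0, fix a sequence ζ_2 = −1, ζ_4, ζ_8, … of primitive 2^n-th roots of unity with ζ_{2^n}² = ζ_{2^{n−1}}, and let ℓ be a labeling of the tree of iterated preimages of x_0 (a map from finite words over {a,b} to the algebraic closure with ℓ(empty word) = x_0, f(ℓ(wa)) = f(ℓ(wb)) = ℓ(w), ℓ(wa) = −ℓ(wb)) satisfying (∏_{w ∈ W(r,i)} ℓ(xawa)) / (∏_{w ∈ W(r,i)} ℓ(xbwa)) = ζ_{2^{i+1}} for every word x and every i ≥ 1. Let σ be any automorphism of the algebraic closure of K fixing K pointwise, and let τ ∈ Aut(T_∞)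 be the induced tree automorphism, i.e., σ(ℓ(w)) = ℓ(τ(w)) for all words w. Then for every word x and every n ≥ 1, σ(ζ_{2^n}) = ζ_{2^n}^m for every integer m congruent to P_r(τ,x) modulo 2^n. In particular, τ ∈ M_{r,∞}; and if every 2-power root of unity lies in K, then τ ∈ B_{r,∞}. -/
lemma mem_Wset (r i : ℕ) (w : List Bool) : w ∈ Wset r i ↔
    w.length = r*i-1 ∧ ∀ j, r ∣ j+1 → ∀ h : j < w.length, w[j] = false := by
  unfold Wset
  simp only [Finset.mem_image, Finset.mem_filter, Finset.mem_univ, true_and]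
  constructor
  · rintro ⟨s, hs, rfl⟩
    refine ⟨by simp, fun j hj h => ?_⟩
    rw [List.getElem_ofFn]
    exact hs _ hj
  · rintro ⟨h1, h2⟩
    refine ⟨fun j => w[(j:ℕ)]'(by rw [h1]; exact j.2), fun j hj => h2 _ hj _, ?_⟩
    apply List.ext_getElem
    · simp [h1]
    · intro n h h'
      rw [List.getElem_ofFn]

lemma mem_Wset_one (r : ℕ) (hr : 1 ≤ r) (w : List Bool) :
    w ∈ Wset r 1 ↔ w.length = r - 1 := by
  rw [mem_Wset, mul_one]
  refine ⟨fun h => h.1, fun h => ⟨h, fun j hj h' => ?_⟩⟩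
  have := Nat.le_of_dvd (by omega) hj
  omega

lemma prod_Wset_succ {M : Type*} [CommMonoid M] (r : ℕ) (hr : 1 ≤ r) (i : ℕ)
    (F : List Bool → M) :
    ∏ w ∈ Wset r (i+2), F w =
      ∏ u ∈ Wset r 1, ∏ w ∈ Wset r (i+1), F (u ++ [false] ++ w) := by
  rw [← Finset.prod_product']
  symm
  have hmul : r * (i+2) = r * (i+1) + r := by ring
  have hpos : r ≤ r * (i+1) := Nat.le_mul_of_pos_right _ (by omega)
  refine Finset.prod_nbij (fun p => p.1 ++ [false] ++ p.2) ?_ ?_ ?_ (fun _ _ => rfl)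
  · rintro ⟨u, w⟩ h
    simp only [Finset.mem_product, mem_Wset_one r hr] at h
    obtain ⟨hu, hw⟩ := h
    rw [mem_Wset] at hw ⊢
    obtain ⟨hl, hw⟩ := hw
    refine ⟨by simp; omega, fun j hj h => ?_⟩
    have hle := Nat.le_of_dvd (by omega) hj
    rcases Nat.lt_or_ge j r with hjr | hjr
    · have : j = u.length := by omega
      subst this
      simp
    · rw [List.getElem_append_right (by simp; omega)]
      apply hw
      have : j - (u ++ [false]).length + 1 = (j + 1) - r := by simp; omega
      rw [this]
      exact Nat.dvd_sub hj dvd_rfl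
  · rintro ⟨u, w⟩ h ⟨u', w'⟩ h' he
    simp only [Finset.coe_product, Set.mem_prod, Finset.mem_coe, mem_Wset_one r hr] at h h'
    simp only at he
    have := List.append_inj he (by simp; omega)
    have h2 := List.append_inj this.1 (by omega)
    rw [h2.1, this.2]
  · intro v hv
    simp only [Finset.mem_coe] at hv
    rw [mem_Wset] at hv
    obtain ⟨hl, hv⟩ := hv
    have hd : v.drop (r-1) = false :: v.drop r := by
      rw [List.drop_eq_getElem_cons (by omega), hv (r-1) (by simp [Nat.sub_add_cancel hr]),
        Nat.sub_add_cancel hr]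
    refine ⟨(v.take (r-1), v.drop r), ?_, ?_⟩
    · simp only [Finset.coe_product, Set.mem_prod, Finset.mem_coe, mem_Wset_one r hr]
      refine ⟨by simp; omega, ?_⟩
      rw [mem_Wset]
      refine ⟨by simp; omega, fun j hj h => ?_⟩
      rw [List.getElem_drop]
      apply hv
      have : r + j + 1 = r + (j + 1) := by ring
      rw [this]
      exact Dvd.dvd.add dvd_rfl hj
    · simp only [List.append_assoc, List.singleton_append]
      rw [← hd, List.take_append_drop]

lemma sum_Wset_succ_s7 {M : Type*} [AddCommMonoid M] (r : ℕ) (hr : 1 ≤ r) (i : ℕ)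
    (F : List Bool → M) :
    ∑ w ∈ Wset r (i+2), F w =
      ∑ u ∈ Wset r 1, ∑ w ∈ Wset r (i+1), F (u ++ [false] ++ w) :=
  prod_Wset_succ (M := Multiplicative M) r hr i F

lemma treeAut_append {τ : List Bool → List Bool} (hτ : IsTreeAut τ) (y u : List Bool) :
    ∃ v, v.length = u.length ∧ τ (y ++ u) = τ y ++ v := by
  induction u using List.reverseRecOn with
  | nil => exact ⟨[], by simp⟩
  | append_singleton u s ih =>
    obtain ⟨v, hv, h⟩ := ih
    obtain ⟨t, ht⟩ := hτ.2.2 (y ++ u) s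
    exact ⟨v ++ [t], by simp [hv], by rw [← List.append_assoc, ht, h, List.append_assoc]⟩

lemma prod_treeAut {M : Type*} [CommMonoid M] {τ : List Bool → List Bool} (hτ : IsTreeAut τ)
    (r : ℕ) (hr : 1 ≤ r) (y : List Bool) (G : List Bool → M) :
    ∏ u ∈ Wset r 1, G (τ (y ++ u)) = ∏ u ∈ Wset r 1, G (τ y ++ u) := by
  choose v hv hv' using treeAut_append hτ y
  have hmaps : Set.MapsTo v (Wset r 1 : Finset (List Bool)) (Wset r 1 : Finset (List Bool)) := by
    intro u hu
    simp only [Finset.mem_coe, mem_Wset_one r hr] at hu ⊢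
    rw [hv, hu]
  have hinj : Set.InjOn v (Wset r 1 : Finset (List Bool)) := by
    intro u _ u' _ h
    have : τ (y ++ u) = τ (y ++ u') := by rw [hv', hv', h]
    exact List.append_cancel_left (hτ.1.1 this)
  refine Finset.prod_nbij v hmaps hinj
    (Finset.surjOn_of_injOn_of_card_le v hmaps hinj le_rfl) (fun u _ => by rw [hv'])

/-- The products from the labeling condition, with the word itself at level `0`. -/
noncomputable def Aprod {L : Type*} [CommMonoid L] (r : ℕ) (ℓ : List Bool → L) :
    ℕ → List Bool → L
  | 0, y => ℓ y
  | i+1, y => ∏ u ∈ Wset r 1, Aprod r ℓ i (y ++ u ++ [false])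

lemma Aprod_succ {L : Type*} [CommMonoid L] (r : ℕ) (hr : 1 ≤ r) (ℓ : List Bool → L)
    (i : ℕ) (y : List Bool) :
    Aprod r ℓ (i+1) y = ∏ w ∈ Wset r (i+1), ℓ (y ++ w ++ [false]) := by
  induction i generalizing y with
  | zero => rfl
  | succ i ih =>
    rw [Aprod, prod_Wset_succ r hr]
    refine Finset.prod_congr rfl fun u _ => ?_
    rw [ih]
    simp

/-- Half of the truncation of `Qr`. -/
noncomputable def eTr (r : ℕ) (τ : List Bool → List Bool) (i : ℕ) (y : List Bool) : ℕ :=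
  ∑ j ∈ Finset.range i, 2^j * ∑ w ∈ Wset r (j+1), par τ (y ++ w)

lemma eTr_succ (r : ℕ) (hr : 1 ≤ r) (τ : List Bool → List Bool) (i : ℕ) (y : List Bool) :
    eTr r τ (i+1) y =
      ∑ u ∈ Wset r 1, (par τ (y ++ u) + 2 * eTr r τ i (y ++ u ++ [false])) := by
  unfold eTr
  have h : ∀ j ∈ Finset.range i, 2^(j+1) * ∑ w ∈ Wset r (j+1+1), par τ (y ++ w) =
      ∑ u ∈ Wset r 1,
        2 * (2^j * ∑ w ∈ Wset r (j+1), par τ (y ++ u ++ [false] ++ w)) := by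
    intro j _
    rw [sum_Wset_succ_s7 r hr, pow_succ', Finset.mul_sum]
    refine Finset.sum_congr rfl fun u _ => ?_
    simp [mul_assoc]
  rw [Finset.sum_range_succ', Finset.sum_congr rfl h, Finset.sum_comm, add_comm,
    Finset.sum_add_distrib]
  congr 1
  · simp
  · refine Finset.sum_congr rfl fun u _ => ?_
    rw [Finset.mul_sum]

lemma Qr_trunc (r : ℕ) (τ : List Bool → List Bool) (i : ℕ) (y : List Bool) :
    (2:ℤ_[2])^(i+1) ∣ Qr r τ y - 2 * (eTr r τ i y : ℤ_[2]) := by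
  unfold Qr
  set g : ℕ → ℤ_[2] := fun j => ∑ w ∈ Wset r (j+1), (par τ (y ++ w) : ℤ_[2]) with hg
  have hs : ∀ k, Summable fun j => (2:ℤ_[2])^(j+k) * g j := by
    intro k
    apply Summable.of_norm_bounded (g := fun j => (1/2:ℝ)^j) summable_geometric_two
    intro j
    rw [norm_mul, norm_pow]
    have h2 : ‖(2:ℤ_[2])‖ = 1/2 := by
      have := PadicInt.norm_p (p := 2)
      simpa using this
    rw [h2]
    calc (1/2:ℝ)^(j+k) * ‖g j‖ ≤ (1/2:ℝ)^(j+k) * 1 := by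
          gcongr; exact PadicInt.norm_le_one _
      _ ≤ (1/2:ℝ)^j := by
          rw [mul_one]
          exact pow_le_pow_of_le_one (by norm_num) (by norm_num) (by omega)
  have hs' : Summable fun j => (2:ℤ_[2])^j * g (j+i) := by
    apply Summable.of_norm_bounded (g := fun j => (1/2:ℝ)^j) summable_geometric_two
    intro j
    rw [norm_mul, norm_pow]
    have h2 : ‖(2:ℤ_[2])‖ = 1/2 := by
      have := PadicInt.norm_p (p := 2)
      simpa using this
    rw [h2]
    calc (1/2:ℝ)^j * ‖g (j+i)‖ ≤ (1/2:ℝ)^j * 1 := by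
          gcongr; exact PadicInt.norm_le_one _
      _ = _ := mul_one _
  refine ⟨∑' j, (2:ℤ_[2])^j * g (j+i), ?_⟩
  rw [← (hs 1).sum_add_tsum_nat_add i, ← hs'.tsum_mul_left]
  have : ∑ j ∈ Finset.range i, (2:ℤ_[2])^(j+1) * g j = 2 * (eTr r τ i y : ℤ_[2]) := by
    simp only [eTr, hg]
    push_cast
    rw [Finset.mul_sum]
    refine Finset.sum_congr rfl fun j _ => ?_
    ring
  rw [this, add_sub_cancel_left]
  refine tsum_congr fun j => ?_
  ring

lemma padic_eq_zero (z : ℤ_[2]) (h : ∀ n : ℕ, 1 ≤ n → (2:ℤ_[2])^n ∣ z) : z = 0 := by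
  rw [← norm_eq_zero]
  refine le_antisymm (le_of_tendsto_of_tendsto' (b := Filter.atTop)
    (f := fun _ : ℕ => ‖z‖) (g := fun n : ℕ => (1/2:ℝ)^(n+1)) tendsto_const_nhds ?_ ?_)
    (norm_nonneg _)
  · exact (tendsto_pow_atTop_nhds_zero_of_lt_one (by norm_num) (by norm_num)).comp
      (Filter.tendsto_add_atTop_nat 1)
  · intro n
    obtain ⟨k, rfl⟩ := h (n+1) (by omega)
    have h2 : ‖(2:ℤ_[2])‖ = 1/2 := by
      have := PadicInt.norm_p (p := 2)
      simpa using this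
    rw [norm_mul, norm_pow, h2]
    exact mul_le_of_le_one_right (by positivity) (PadicInt.norm_le_one _)

lemma padic_approx (z : ℤ_[2]) (n : ℕ) : ∃ m : ℤ, (2:ℤ_[2])^n ∣ (m:ℤ_[2]) - z := by
  refine ⟨(z.appr n : ℤ), ?_⟩
  have := PadicInt.appr_spec n z
  rw [Ideal.mem_span_singleton] at this
  rw [dvd_sub_comm]
  exact_mod_cast this

lemma padic_dvd_int (n : ℕ) (k : ℤ) : (2:ℤ_[2])^n ∣ (k:ℤ_[2]) ↔ (2:ℤ)^n ∣ k := by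
  have := PadicInt.pow_p_dvd_int_iff (p := 2) n k
  exact_mod_cast this

/-- `K` a field of characteristic `≠ 2`, `f(z) = z² + c ∈ K[z]` with
`f^r(0) = 0` for a minimal `r ≥ 1`; `x₀ ∈ K` not in the forward orbit of `0`;
`ζ 1 = −1, ζ 2, …` a compatible sequence of primitive `2^n`-th roots of unity; and `ℓ` a
labeling of the preimage tree of `x₀` satisfying
`(∏_{w ∈ W(r,i)} ℓ(xawa))/(∏_{w ∈ W(r,i)} ℓ(xbwa)) = ζ (i+1)` for all `x` and `i ≥ 1`.
Let `σ` be an automorphism of the algebraic closure fixing `K` pointwise, and let `τ` be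
the induced tree automorphism, i.e. `σ(ℓ(w)) = ℓ(τ(w))` for all words `w`. Then for every
word `x` and every `n ≥ 1`, `σ(ζ n) = (ζ n)^m` for every integer `m` congruent to
`P_r(τ,x)` modulo `2^n`. In particular `τ ∈ M_{r,∞}`; and if every `2`-power root of
unity lies in `K`, then `τ ∈ B_{r,∞}`. -/
theorem galois_action_on_roots_of_unity (K : Type*) [Field K] (hchar : ringChar K ≠ 2)
    (c : K) (r : ℕ) (hr : 1 ≤ r)
    (hper : (fun z : K => z ^ 2 + c)^[r] 0 = 0)
    (hmin : ∀ j : ℕ, 1 ≤ j → j < r → (fun z : K => z ^ 2 + c)^[j] 0 ≠ 0)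
    (x₀ : K)
    (hx₀ : ∀ i : ℕ, (fun z : K => z ^ 2 + c)^[i] 0 ≠ x₀)
    (ζ : ℕ → AlgebraicClosure K)
    (hζ1 : ζ 1 = -1)
    (hζprim : ∀ n : ℕ, 1 ≤ n → IsPrimitiveRoot (ζ n) (2 ^ n))
    (hζsq : ∀ n : ℕ, 2 ≤ n → (ζ n) ^ 2 = ζ (n-1))
    (ℓ : List Bool → AlgebraicClosure K)
    (hroot : ℓ [] = algebraMap K (AlgebraicClosure K) x₀)
    (hpreim : ∀ (w : List Bool) (s : Bool),
      (ℓ (w ++ [s])) ^ 2 + algebraMap K (AlgebraicClosure K) c = ℓ w)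
    (hneg : ∀ w : List Bool, ℓ (w ++ [false]) = - ℓ (w ++ [true]))
    (hprod : ∀ (x : List Bool) (i : ℕ), 1 ≤ i →
      (∏ w ∈ Wset r i, ℓ (x ++ [false] ++ w ++ [false])) /
        (∏ w ∈ Wset r i, ℓ (x ++ [true] ++ w ++ [false])) = ζ (i+1))
    (σ : AlgebraicClosure K ≃ₐ[K] AlgebraicClosure K)
    (τ : List Bool → List Bool) (hτ : IsTreeAut τ)
    (hcompat : ∀ w : List Bool, σ (ℓ w) = ℓ (τ w)) :
    (∀ (x : List Bool) (n : ℕ), 1 ≤ n → ∀ m : ℤ,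
      (2:ℤ_[2])^n ∣ ((m : ℤ_[2]) - Pr r τ x) → σ (ζ n) = (ζ n) ^ m) ∧
    τ ∈ Mset r ∧
    ((∀ u : AlgebraicClosure K, (∃ n : ℕ, u ^ (2^n) = 1) →
        u ∈ Set.range (algebraMap K (AlgebraicClosure K))) → τ ∈ Bset r) := by
  have hζ0 : ∀ n, 1 ≤ n → ζ n ≠ 0 := fun n hn => (hζprim n hn).ne_zero (by positivity)
  -- relation between siblings
  have hsib : ∀ i v, Aprod r ℓ i (v ++ [false]) = ζ (i+1) * Aprod r ℓ i (v ++ [true]) := by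
    intro i v
    cases i with
    | zero => simp only [Aprod, zero_add, hζ1, hneg]; ring
    | succ i =>
      have h := hprod v (i+1) (by omega)
      rw [← Aprod_succ r hr, ← Aprod_succ r hr] at h
      have hne : Aprod r ℓ (i+1) (v ++ [true]) ≠ 0 := by
        intro h0
        rw [h0, div_zero] at h
        exact hζ0 _ (by omega) h.symm
      exact (div_eq_iff hne).1 h
  have hpar : ∀ v, (par τ v = 0 ∧ τ (v ++ [false]) = τ v ++ [false] ∧
      τ (v ++ [true]) = τ v ++ [true]) ∨ (par τ v = 1 ∧ τ (v ++ [false]) = τ v ++ [true] ∧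
      τ (v ++ [true]) = τ v ++ [false]) := by
    intro v
    obtain ⟨s, hs⟩ := hτ.2.2 v false
    obtain ⟨t, ht⟩ := hτ.2.2 v true
    have hne : τ (v ++ [false]) ≠ τ (v ++ [true]) := by
      intro h
      have := hτ.1.1 h
      simp at this
    rw [hs, ht] at hne
    unfold par
    rw [hs, ht]
    cases s <;> cases t <;> simp_all
  -- the action on products
  have hact : ∀ i y, σ (Aprod r ℓ i y) =
      Aprod r ℓ i (τ y) * (ζ (i+1)) ^ (-(2 * (eTr r τ i y : ℤ))) := by
    intro i
    induction i with
    | zero => intro y; simp [Aprod, eTr, hcompat]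
    | succ i ih =>
      intro y
      have hz := hζ0 (i+2) (by omega)
      have hsq : ζ (i+1) = ζ (i+2) ^ (2:ℤ) := by
        have := hζsq (i+2) (by omega)
        have h' : ζ (i+1) = ζ (i+2) ^ 2 := this.symm
        exact_mod_cast h'
      have hstep : ∀ u, σ (Aprod r ℓ i (y ++ u ++ [false])) =
          Aprod r ℓ i (τ (y ++ u) ++ [false]) * (ζ (i+2)) ^ (-(2 * ((par τ (y ++ u)
            + 2 * eTr r τ i (y ++ u ++ [false]) : ℕ) : ℤ))) := by
        intro u
        rw [ih]
        rcases hpar (y ++ u) with ⟨h0, h1, -⟩ | ⟨h0, h1, -⟩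
        · rw [h0, h1, hsq, ← zpow_mul]
          congr 2
          push_cast; ring
        · rw [h0, h1, hsib, hsq, ← zpow_mul, mul_comm (ζ (i+2) ^ (2:ℤ)), mul_assoc,
            ← zpow_add₀ hz]
          congr 2
          push_cast; ring
      rw [Aprod, map_prod, Finset.prod_congr rfl (fun u _ => hstep u), Finset.prod_mul_distrib,
        prod_treeAut hτ r hr y (fun v => Aprod r ℓ i (v ++ [false])), Aprod, eTr_succ r hr]
      congr 1
      have hsum : ∀ (s : Finset (List Bool)) (g : List Bool → ℕ),
          ∏ u ∈ s, ζ (i+2) ^ (-(2 * (g u : ℤ))) =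
            ζ (i+2) ^ (-(2 * ((∑ u ∈ s, g u : ℕ) : ℤ))) := by
        intro s g
        induction s using Finset.induction_on with
        | empty => simp
        | insert a s ha ihs =>
          rw [Finset.prod_insert ha, Finset.sum_insert ha, ihs, ← zpow_add₀ hz]
          congr 1
          push_cast; ring
      exact hsum _ _
  have key : ∀ (x : List Bool) (n : ℕ), 1 ≤ n → ∀ m : ℤ,
      (2:ℤ_[2])^n ∣ ((m : ℤ_[2]) - Pr r τ x) → σ (ζ n) = (ζ n) ^ m := by
    intro x n hn m hm
    obtain ⟨i, rfl⟩ : ∃ i, n = i + 1 := ⟨n-1, by omega⟩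
    have hz := hζ0 (i+1) hn
    set k : ℤ := (-1)^(par τ x) + 2 * (eTr r τ i (x ++ [true]) : ℤ)
      - 2 * (eTr r τ i (x ++ [false]) : ℤ) with hk
    have hmk : (2:ℤ)^(i+1) ∣ m - k := by
      rw [← padic_dvd_int]
      have h1 := Qr_trunc r τ i (x ++ [true])
      have h2 := Qr_trunc r τ i (x ++ [false])
      have h3 := (hm.add h1).sub h2
      convert h3 using 1
      rw [hk, Pr]
      push_cast
      ring
    have hpow : ζ (i+1) ^ m = ζ (i+1) ^ k := by
      have : ζ (i+1) ^ (m - k) = 1 := by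
        rw [(hζprim (i+1) hn).zpow_eq_one_iff_dvd]
        exact_mod_cast hmk
      rw [zpow_sub₀ hz] at this
      exact (div_eq_one_iff_eq (zpow_ne_zero _ hz)).1 this
    rw [hpow]
    cases i with
    | zero =>
      have hodd : Odd k := by
        have : Odd ((-1:ℤ)^(par τ x)) := Odd.pow (by decide)
        rw [hk, add_sub_assoc, ← mul_sub]
        exact this.add_even (even_two_mul _)
      simp only [zero_add, hζ1, map_neg, map_one]
      exact hodd.neg_one_zpow.symm
    | succ i =>
      have hb : ∀ v, Aprod r ℓ (i+1) (v ++ [true]) ≠ 0 := by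
        intro v h0
        have h := hprod v (i+1) (by omega)
        rw [← Aprod_succ r hr, ← Aprod_succ r hr, h0, div_zero] at h
        exact hζ0 _ (by omega) h.symm
      have h := congrArg σ (hsib (i+1) x)
      rw [map_mul, hact, hact] at h
      rcases hpar x with ⟨h0, h1, h2⟩ | ⟨h0, h1, h2⟩
      · rw [h1, h2, hsib] at h
        rw [hk, h0, zpow_sub₀ hz, zpow_add₀ hz]
        rw [zpow_neg, zpow_neg] at h
        have hb' := hb (τ x)
        have e1 := zpow_ne_zero (2 * (eTr r τ (i+1) (x ++ [true]) : ℤ)) hz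
        have e2 := zpow_ne_zero (2 * (eTr r τ (i+1) (x ++ [false]) : ℤ)) hz
        generalize ζ (i+1+1) ^ (2 * (eTr r τ (i+1) (x ++ [true]) : ℤ)) = p at *
        generalize ζ (i+1+1) ^ (2 * (eTr r τ (i+1) (x ++ [false]) : ℤ)) = q at *
        generalize Aprod r ℓ (i+1) (τ x ++ [true]) = B at *
        generalize σ (ζ (i+1+1)) = S at *
        rw [pow_zero, zpow_one]
        field_simp at h ⊢
        linear_combination -h
      · rw [h1, h2, hsib] at h
        rw [hk, h0, zpow_sub₀ hz, zpow_add₀ hz]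
        rw [zpow_neg, zpow_neg] at h
        have hb' := hb (τ x)
        have e1 := zpow_ne_zero (2 * (eTr r τ (i+1) (x ++ [true]) : ℤ)) hz
        have e2 := zpow_ne_zero (2 * (eTr r τ (i+1) (x ++ [false]) : ℤ)) hz
        generalize ζ (i+1+1) ^ (2 * (eTr r τ (i+1) (x ++ [true]) : ℤ)) = p at *
        generalize ζ (i+1+1) ^ (2 * (eTr r τ (i+1) (x ++ [false]) : ℤ)) = q at *
        generalize Aprod r ℓ (i+1) (τ x ++ [true]) = B at *
        generalize σ (ζ (i+1+1)) = S at *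
        rw [pow_one, zpow_neg, zpow_one]
        field_simp at h ⊢
        linear_combination -h
  have hexp : ∀ n, 1 ≤ n → ∀ m m' : ℤ, ζ n ^ m = ζ n ^ m' →
      (2:ℤ_[2])^n ∣ (m : ℤ_[2]) - m' := by
    intro n hn m m' h
    have : ζ n ^ (m - m') = 1 := by
      rw [zpow_sub₀ (hζ0 n hn), h, div_self (zpow_ne_zero _ (hζ0 n hn))]
    rw [(hζprim n hn).zpow_eq_one_iff_dvd] at this
    have h2 : (2:ℤ)^n ∣ m - m' := by exact_mod_cast this
    rw [← padic_dvd_int] at h2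
    exact_mod_cast h2
  have hM : τ ∈ Mset r := by
    refine ⟨hτ, fun x₁ x₂ => ?_⟩
    rw [← sub_eq_zero]
    refine padic_eq_zero _ fun n hn => ?_
    obtain ⟨m, hm⟩ := padic_approx (Pr r τ x₁) n
    obtain ⟨m', hm'⟩ := padic_approx (Pr r τ x₂) n
    have h := hexp n hn m m' ((key x₁ n hn m hm).symm.trans (key x₂ n hn m' hm'))
    have h3 := (h.sub hm).add hm'
    convert h3 using 1
    ring
  refine ⟨key, hM, fun hu => ⟨hM, ?_⟩⟩
  rw [← sub_eq_zero]
  refine padic_eq_zero _ fun n hn => ?_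
  obtain ⟨m, hm⟩ := padic_approx (Pr r τ []) n
  obtain ⟨a, ha⟩ := hu (ζ n) ⟨n, (hζprim n hn).pow_eq_one⟩
  have hfix : σ (ζ n) = ζ n := by rw [← ha]; exact σ.commutes a
  have h := hexp n hn m 1 (by rw [← key [] n hn m hm, hfix, zpow_one])
  have h3 := h.sub hm
  convert h3 using 1
  push_cast
  ring
end

section
/- Fix an integer r ≥ 1. For each i ∈ {1, …, r}, let α_i be the automorphism of T_∞ determined by: Par(α_i, w) = 1 if w = a^{i−1}(ba^{r−1})^n for some integer n ≥ 0, and Par(α_i, w) = 0 otherwise (here a^j denotes j consecutive copies of the symbol a, and (ba^{r−1})^n denotes n consecutive copies of the word ba^{r−1}). Then P_r(α_i, x) = 1 for every word x; in particular each α_i lies in B_{r,∞}. -/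
theorem mem_Wset_imp {r j : ℕ} {w : List Bool} (h : w ∈ Wset r j) :
    w.length = r * j - 1 ∧ ∀ k, r ∣ k + 1 → w[k]? ≠ some true := by
  unfold Wset at h
  rw [Finset.mem_image] at h
  obtain ⟨s, hs, rfl⟩ := h
  rw [Finset.mem_filter] at hs
  refine ⟨by simp, fun k hk he => ?_⟩
  rw [List.getElem?_eq_some_iff] at he
  obtain ⟨hl, he⟩ := he
  rw [List.length_ofFn] at hl
  have := hs.2 ⟨k, hl⟩ hk
  rw [List.getElem_ofFn, this] at he
  cases he

theorem replicate_mem_Wset (r : ℕ) : List.replicate (r-1) false ∈ Wset r 1 := by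
  unfold Wset
  rw [Finset.mem_image]
  refine ⟨fun _ => false, by simp, ?_⟩
  rw [List.ofFn_const, Nat.mul_one]

theorem par_cases (σ : List Bool → List Bool) (x : List Bool) : par σ x = 0 ∨ par σ x = 1 := by
  unfold par; split_ifs <;> simp

/-- The word `a^{i-1} (b a^{r-1})^n`. -/
def uw (r i n : ℕ) : List Bool := List.replicate (i-1) false ++
        (List.replicate n (true :: List.replicate (r-1) false)).flatten

theorem uw_length {r i n : ℕ} (hr : 1 ≤ r) : (uw r i n).length = i - 1 + r * n := by
  simp [uw]
  rw [Nat.sub_add_cancel hr, Nat.mul_comm]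

theorem uw_add (r i n m : ℕ) : uw r i (n + m) = uw r i n ++
    (List.replicate m (true :: List.replicate (r-1) false)).flatten := by
  rw [uw, uw, List.replicate_add, List.flatten_append, List.append_assoc]

theorem key {r i : ℕ} (hr : 1 ≤ r) (hi1 : 1 ≤ i) (hir : i ≤ r) {x w : List Bool} {s : Bool}
    {j N : ℕ} (hw : w ∈ Wset r (j+1)) (h : (x ++ [s]) ++ w = uw r i N) :
    (∃ n, x = uw r i n) ∧ s = true ∧ j = 0 ∧ w = List.replicate (r-1) false := by
  obtain ⟨hl, hk⟩ := mem_Wset_imp hw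
  have hlen := congrArg List.length h
  have hpos : 1 ≤ r * (j+1) := Nat.mul_pos hr (Nat.succ_pos _)
  rw [uw_length hr, List.length_append, List.length_append, List.length_singleton, hl] at hlen
  have hN : j + 1 ≤ N := by
    by_contra hc
    have h1 : N + 1 ≤ j + 1 := by omega
    have h2 := Nat.mul_le_mul_left r h1
    rw [Nat.mul_add r N 1] at h2
    omega
  obtain ⟨n, rfl⟩ := Nat.exists_eq_add_of_le' hN
  rw [uw_add, List.append_assoc] at h
  rw [Nat.mul_add r n] at hlen
  have hx := List.append_inj h (by rw [uw_length hr]; omega)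
  obtain ⟨hx, hsw⟩ := hx
  rw [List.replicate_succ, List.flatten_cons] at hsw
  simp only [List.nil_append, List.cons_append, List.cons.injEq] at hsw
  obtain ⟨hs, hw'⟩ := hsw
  have hj : j = 0 := by
    rcases j with _ | j
    · rfl
    · exfalso
      apply hk (r-1) (by rw [Nat.sub_add_cancel hr])
      rw [hw', List.replicate_succ, List.flatten_cons]
      rw [List.getElem?_append_right (by simp)]
      simp
  subst hj
  exact ⟨⟨n, hx⟩, hs, rfl, by simpa using hw'⟩

theorem Pink_generators_in_B (r : ℕ) (hr : 1 ≤ r) (i : ℕ) (hi1 : 1 ≤ i) (hir : i ≤ r)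
    (α : List Bool → List Bool) (hα : IsTreeAut α)
    (hpar : ∀ w : List Bool, (par α w = 1 ↔ ∃ n : ℕ,
      w = List.replicate (i-1) false ++
        (List.replicate n (true :: List.replicate (r-1) false)).flatten)) :
    (∀ x : List Bool, Pr r α x = 1) ∧ α ∈ Bset r := by
  have hp : ∀ w, par α w = 1 ↔ ∃ n, w = uw r i n := hpar
  have hz : ∀ x s, (par α x = 0 ∨ s = false) → Qr r α (x ++ [s]) = 0 := by
    intro x s h
    unfold Qr
    rw [← tsum_zero (α := ℤ_[2]) (β := ℕ)]
    congr 1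
    funext j
    rw [Finset.sum_eq_zero, mul_zero]
    intro w hw
    rcases par_cases α (x ++ [s] ++ w) with h0 | h1
    · rw [h0, Nat.cast_zero]
    · exfalso
      obtain ⟨N, hN⟩ := (hp _).1 h1
      obtain ⟨hx, hs, -, -⟩ := key hr hi1 hir hw hN
      have := (hp x).2 hx
      rcases h with h | h
      · omega
      · rw [h] at hs; cases hs
  have h2 : ∀ x, par α x = 1 → Qr r α (x ++ [true]) = 2 := by
    intro x hx
    unfold Qr
    rw [tsum_eq_single 0, Finset.sum_eq_single (List.replicate (r-1) false)]
    · have : par α (x ++ [true] ++ List.replicate (r-1) false) = 1 := by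
        obtain ⟨n, rfl⟩ := (hp x).1 hx
        refine (hp _).2 ⟨n+1, ?_⟩
        rw [uw_add]; simp
      rw [this]; simp
    · intro w hw hne
      rcases par_cases α (x ++ [true] ++ w) with h0 | h1
      · rw [h0, Nat.cast_zero]
      · obtain ⟨N, hN⟩ := (hp _).1 h1
        exact absurd (key hr hi1 hir hw hN).2.2.2 hne
    · intro h
      exact absurd (replicate_mem_Wset r) h
    · intro j hj
      rw [Finset.sum_eq_zero, mul_zero]
      intro w hw
      rcases par_cases α (x ++ [true] ++ w) with h0 | h1
      · rw [h0, Nat.cast_zero]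
      · obtain ⟨N, hN⟩ := (hp _).1 h1
        exact absurd (key hr hi1 hir hw hN).2.2.1 hj
  have main : ∀ x, Pr r α x = 1 := by
    intro x
    unfold Pr
    rw [hz x false (Or.inr rfl)]
    rcases par_cases α x with h | h
    · rw [hz x true (Or.inl h), h]; simp
    · rw [h2 x h, h]; norm_num
  exact ⟨main, ⟨hα, fun x y => by rw [main, main]⟩, main []⟩
end

section
/- Let r ≥ 1 and n ≥ 0 be integers, let x be a word, and let σ₁, σ₂ ∈ Aut(T_∞) satisfy Par(σ₁, xw) = Par(σ₂, xw) for every word w (including the empty word) of length at most nr. Then P_r(σ₁, x) ≡ P_r(σ₂, x) (mod 2^{n+1}) in ℤ₂. -/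
theorem summable_aux (c : ℕ → ℤ_[2]) : Summable (fun i : ℕ => (2:ℤ_[2])^i * c i) := by
  refine Summable.of_norm_bounded (g := fun i : ℕ => (1/2:ℝ)^i) summable_geometric_two ?_
  intro i
  have h2 : ‖(2:ℤ_[2])‖ = 1/2 := by
    have := PadicInt.norm_p (p := 2)
    simpa using this
  rw [norm_mul, norm_pow, h2]
  exact mul_le_of_le_one_right (by positivity) (PadicInt.norm_le_one _)

theorem Qr_split (r n : ℕ) (σ : List Bool → List Bool) (x : List Bool) :
    ∃ y : ℤ_[2], Qr r σ x = ∑ i ∈ Finset.range n,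
      (2:ℤ_[2])^(i+1) * ∑ w ∈ Wset r (i+1), (par σ (x ++ w) : ℤ_[2]) + 2^(n+1) * y := by
  set c : ℕ → ℤ_[2] := fun i => ∑ w ∈ Wset r (i+1), (par σ (x ++ w) : ℤ_[2]) with hc
  have hs : Summable (fun i : ℕ => (2:ℤ_[2])^(i+1) * c i) := by
    have := summable_aux (fun i => 2 * c i)
    refine this.congr ?_
    intro i
    ring
  refine ⟨∑' i : ℕ, (2:ℤ_[2])^i * c (i+n), ?_⟩
  rw [← (summable_aux (fun i => c (i+n))).tsum_mul_left]
  change ∑' i : ℕ, (2:ℤ_[2])^(i+1) * c i = _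
  rw [← hs.sum_add_tsum_nat_add n]
  congr 1
  refine tsum_congr fun i => ?_
  ring

theorem Qr_dvd (r : ℕ) (hr : 1 ≤ r) (n : ℕ) (x : List Bool) (s : Bool)
    (σ₁ σ₂ : List Bool → List Bool)
    (hpar : ∀ w : List Bool, w.length ≤ n * r → par σ₁ (x ++ w) = par σ₂ (x ++ w)) :
    (2:ℤ_[2])^(n+1) ∣ (Qr r σ₁ (x ++ [s]) - Qr r σ₂ (x ++ [s])) := by
  obtain ⟨y₁, e₁⟩ := Qr_split r n σ₁ (x ++ [s])
  obtain ⟨y₂, e₂⟩ := Qr_split r n σ₂ (x ++ [s])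
  refine ⟨y₁ - y₂, ?_⟩
  rw [e₁, e₂, Finset.sum_congr rfl (g := fun i => (2:ℤ_[2])^(i+1) *
    ∑ w ∈ Wset r (i+1), (par σ₂ (x ++ [s] ++ w) : ℤ_[2]))]
  · ring
  · intro i hi
    congr 1
    refine Finset.sum_congr rfl fun w hw => ?_
    have hl : w.length = r * (i+1) - 1 := by
      simp only [Wset, Finset.mem_image] at hw
      obtain ⟨f, -, rfl⟩ := hw
      simp
    have hi' : i + 1 ≤ n := Finset.mem_range.mp hi
    have h1 : 1 ≤ r * (i+1) := Nat.mul_pos hr (Nat.succ_pos i)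
    have h2 : r * (i+1) ≤ n * r := by
      rw [mul_comm n r]
      exact Nat.mul_le_mul_left r hi'
    have := hpar ([s] ++ w) (by
      rw [List.length_append, List.length_singleton, hl]
      omega)
    rw [List.append_assoc, this]

/-- Let `r ≥ 1`, `n ≥ 0`, let `x` be a word, and let `σ₁, σ₂ ∈ Aut(T_∞)`
satisfy `Par(σ₁, xw) = Par(σ₂, xw)` for every word `w` (including the empty word) of
length at most `nr`. Then `P_r(σ₁, x) ≡ P_r(σ₂, x) (mod 2^{n+1})` in `ℤ₂`. -/
theorem Pr_congruent_of_agree (r : ℕ) (hr : 1 ≤ r) (n : ℕ) (x : List Bool)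
    (σ₁ σ₂ : List Bool → List Bool) (h₁ : IsTreeAut σ₁) (h₂ : IsTreeAut σ₂)
    (hpar : ∀ w : List Bool, w.length ≤ n * r → par σ₁ (x ++ w) = par σ₂ (x ++ w)) :
    (2:ℤ_[2])^(n+1) ∣ (Pr r σ₁ x - Pr r σ₂ x) := by
  have h0 : par σ₁ x = par σ₂ x := by simpa using hpar [] (by simp)
  have e : Pr r σ₁ x - Pr r σ₂ x = (Qr r σ₁ (x ++ [true]) - Qr r σ₂ (x ++ [true])) -
      (Qr r σ₁ (x ++ [false]) - Qr r σ₂ (x ++ [false])) := by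
    unfold Pr
    rw [h0]
    ring
  rw [e]
  exact dvd_sub (Qr_dvd r hr n x true σ₁ σ₂ hpar) (Qr_dvd r hr n x false σ₁ σ₂ hpar)
end

section
/- Fix an integer r ≥ 1, and for i ∈ {1, …, r} let α_i be the automorphism of T_∞ determined by Par(α_i, w) = 1 if and only if w = a^{i−1}(ba^{r−1})^n for some n ≥ 0. Then B_{r,∞} is the closure of the subgroup generated by α_1, …, α_r in the topology of pointwise convergence; that is, an automorphism σ ∈ Aut(T_∞) lies in B_{r,∞} if and only if for every integer m ≥ 1 there exists an element τ of the subgroup generated by α_1, …, α_r with σ(w) = τ(w) for every word w of length at most m. -/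
namespace Pink

/-- Automorphism with portrait `p`. -/
def act : (List Bool → Bool) → List Bool → List Bool
  | _, [] => []
  | p, s :: w => (xor s (p [])) :: act (fun v => p (s :: v)) w

def sec (p : List Bool → Bool) (x : List Bool) : List Bool → Bool := fun v => p (x ++ v)

def mul (p q : List Bool → Bool) : List Bool → Bool := fun w => xor (q w) (p (act q w))

def one : List Bool → Bool := fun _ => false

def bi (b : Bool) : ℤ := if b then 1 else 0

def S : ℕ → (List Bool → ℤ) → ℤ
  | 0, F => F []
  | n+1, F => S n (fun w => F (false :: w)) + S n (fun w => F (true :: w))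

def f (k : ℕ) : ℕ → (List Bool → Bool) → ℤ
  | 0, _ => 0
  | n+1, p => S k (fun w => bi (p w) + 2 * f k n (sec p (w ++ [false])))

def BP (k : ℕ) (p : List Bool → Bool) : Prop :=
  ∀ x n, f k n (sec p (x ++ [true])) ≡ f k n (sec p (x ++ [false])) + bi (p x) [ZMOD 2^n]

theorem meq {a b n : ℤ} (h : a = b) : a ≡ b [ZMOD n] := by rw [h]

theorem act_cons (p : List Bool → Bool) (s : Bool) (w : List Bool) :
    act p (s :: w) = (xor s (p [])) :: act (sec p [s]) w := rfl

theorem sec_sec (p : List Bool → Bool) (x y : List Bool) : sec (sec p x) y = sec p (x ++ y) := by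
  funext v; simp [sec]

theorem sec_nil (p : List Bool → Bool) : sec p [] = p := rfl

theorem sec_one (x : List Bool) : sec one x = one := rfl

theorem act_append (p : List Bool → Bool) (x w : List Bool) :
    act p (x ++ w) = act p x ++ act (sec p x) w := by
  induction x generalizing p with
  | nil => simp [act, sec_nil]
  | cons s x ih =>
    rw [List.cons_append, act_cons, act_cons, ih, sec_sec]; rfl

theorem act_snoc (p : List Bool → Bool) (x : List Bool) (s : Bool) :
    act p (x ++ [s]) = act p x ++ [xor s (p x)] := by
  rw [act_append]; simp [act, sec]

theorem act_length (p : List Bool → Bool) (x : List Bool) : (act p x).length = x.length := by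
  induction x generalizing p with
  | nil => simp [act]
  | cons s x ih => rw [act_cons]; simp [ih]

theorem act_one (x : List Bool) : act one x = x := by
  induction x with
  | nil => simp [act]
  | cons s x ih => rw [act_cons, sec_one, ih]; simp [one]

theorem sec_mul (p q : List Bool → Bool) (x : List Bool) :
    sec (mul p q) x = mul (sec p (act q x)) (sec q x) := by
  funext v; simp [sec, mul, act_append]

theorem act_mul (p q : List Bool → Bool) (x : List Bool) :
    act (mul p q) x = act p (act q x) := by
  induction x using List.reverseRecOn with
  | nil => simp [act]
  | append_singleton x s ih =>
    rw [act_snoc, act_snoc, act_snoc, ih]; simp [mul]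

theorem act_inj_aux {p q : List Bool → Bool} {L : ℕ}
    (h : ∀ w : List Bool, w.length ≤ L → act p w = act q w)
    (w : List Bool) (hw : w.length < L) : p w = q w := by
  have h1 := h (w ++ [false]) (by simpa using hw)
  rw [act_snoc, act_snoc] at h1
  have := (List.append_inj h1 (by simp [act_length])).2
  simpa using this

theorem act_inj {p q : List Bool → Bool} (h : ∀ w, act p w = act q w) : p = q := by
  funext w
  exact act_inj_aux (L := w.length + 1) (fun w _ => h w) w (by simp)

theorem S_congr (n : ℕ) (F F' : List Bool → ℤ) (h : ∀ w, w.length = n → F w = F' w) :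
    S n F = S n F' := by
  induction n generalizing F F' with
  | zero => exact h [] rfl
  | succ n ih =>
    simp only [S]
    rw [ih _ _ (fun w hw => h (false :: w) (by simp [hw])),
      ih _ _ (fun w hw => h (true :: w) (by simp [hw]))]

theorem S_modEq (n : ℕ) (N : ℤ) (F F' : List Bool → ℤ) (h : ∀ w, F w ≡ F' w [ZMOD N]) :
    S n F ≡ S n F' [ZMOD N] := by
  induction n generalizing F F' with
  | zero => exact h []
  | succ n ih => exact (ih _ _ fun w => h _).add (ih _ _ fun w => h _)

theorem S_add (n : ℕ) (F F' : List Bool → ℤ) : S n (fun w => F w + F' w) = S n F + S n F' := by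
  induction n generalizing F F' with
  | zero => rfl
  | succ n ih => simp only [S, ih]; ring

theorem S_mul (n : ℕ) (c : ℤ) (F : List Bool → ℤ) : S n (fun w => c * F w) = c * S n F := by
  induction n generalizing F with
  | zero => rfl
  | succ n ih => simp only [S, ih]; ring

theorem S_zero (n : ℕ) : S n (fun _ => 0) = 0 := by
  induction n with
  | zero => rfl
  | succ n ih => simp only [S, ih]; ring

theorem S_act (n : ℕ) (F : List Bool → ℤ) (q : List Bool → Bool) :
    S n (fun w => F (act q w)) = S n F := by
  induction n generalizing F q with
  | zero => rfl
  | succ n ih =>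
    simp only [S, act_cons]
    cases h : q []
    · simp only [Bool.xor_false]
      rw [ih (fun w => F (false :: w)), ih (fun w => F (true :: w))]
    · simp only [Bool.xor_true, Bool.not_true, Bool.not_false]
      rw [ih (fun w => F (false :: w)), ih (fun w => F (true :: w))]; ring

theorem S_S (m n : ℕ) (F : List Bool → ℤ) :
    S (m + n) F = S m (fun w => S n (fun v => F (w ++ v))) := by
  induction m generalizing F with
  | zero => simp [S]
  | succ m ih => rw [Nat.succ_add]; simp only [S, ih, List.cons_append]

theorem f_one (k n : ℕ) : f k n one = 0 := by
  induction n with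
  | zero => rfl
  | succ n ih => simp [f, sec_one, ih, one, bi, S_zero]

theorem f_congr (k n : ℕ) (p q : List Bool → Bool)
    (h : ∀ w : List Bool, w.length < n * (k+1) → p w = q w) : f k n p = f k n q := by
  induction n generalizing p q with
  | zero => rfl
  | succ n ih =>
    simp only [f]
    apply S_congr
    intro w hw
    rw [h w (by rw [hw]; nlinarith)]
    rw [ih (sec p _) (sec q _)]
    intro v hv
    apply h
    simp [hw]
    nlinarith

theorem BP_sec {k : ℕ} {p : List Bool → Bool} (h : BP k p) (x : List Bool) : BP k (sec p x) := by
  intro y n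
  have := h (x ++ y) n
  rw [sec_sec, sec_sec]
  simpa [sec] using this

theorem BP_snoc {k : ℕ} {p : List Bool → Bool} (h : BP k p) (x : List Bool) (n : ℕ) (s : Bool) :
    f k n (sec p (x ++ [s])) ≡ f k n (sec p (x ++ [false])) + bi s * bi (p x) [ZMOD 2^n] := by
  cases s
  · simp [bi]
  · have := h x n
    simpa [bi] using this

theorem f_hom {k : ℕ} {p : List Bool → Bool} (hp : BP k p) (q : List Bool → Bool) (n : ℕ) :
    f k n (mul p q) ≡ f k n p + f k n q [ZMOD 2^n] := by
  induction n generalizing p q with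
  | zero => simp [f]
  | succ n ih =>
    simp only [f]
    rw [← S_act k (fun w => bi (p w) + 2 * f k n (sec p (w ++ [false]))) q, ← S_add]
    apply S_modEq
    intro w
    rw [sec_mul]
    have h1 := ih (BP_sec hp (act q (w ++ [false]))) (sec q (w ++ [false]))
    rw [act_snoc, Bool.false_xor] at h1
    have h2 := h1.trans ((BP_snoc hp (act q w) n (q w)).add_right _)
    have h3 := h2.mul_left' (c := 2)
    rw [← pow_succ'] at h3
    rw [act_snoc, Bool.false_xor]
    refine (h3.add_left _).trans ?_
    apply meq
    simp only [mul]
    cases q w <;> cases p (act q w) <;> simp [bi] <;> ring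

theorem BP_one (k : ℕ) : BP k one := by
  intro x n
  simp [sec_one, f_one, one, bi]

theorem BP_mul {k : ℕ} {p q : List Bool → Bool} (hp : BP k p) (hq : BP k q) : BP k (mul p q) := by
  intro x n
  have key : ∀ s, f k n (sec (mul p q) (x ++ [s])) ≡ f k n (sec p (act q x ++ [false])) +
      bi (xor s (q x)) * bi (p (act q x)) + (f k n (sec q (x ++ [false])) + bi s * bi (q x))
      [ZMOD 2^n] := by
    intro s
    rw [sec_mul]
    refine (f_hom (BP_sec hp _) _ n).trans ?_
    rw [act_snoc]
    exact (BP_snoc hp _ n _).add (BP_snoc hq _ n _)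
  refine (key true).trans (Int.ModEq.trans ?_ ((key false).symm.add_right _))
  apply meq
  simp only [mul]
  cases q x <;> cases p (act q x) <;> simp [bi] <;> ring

theorem BP_inv {k : ℕ} {p q : List Bool → Bool} (hp : BP k p) (h : mul p q = one) : BP k q := by
  intro x n
  have key : ∀ s, f k n (sec q (x ++ [s])) ≡ - (f k n (sec p (act q x ++ [false])) +
      bi (xor s (q x)) * bi (p (act q x))) [ZMOD 2^n] := by
    intro s
    have h1 := f_hom (BP_sec hp (act q (x ++ [s]))) (sec q (x ++ [s])) n
    rw [← sec_mul, h, sec_one, f_one] at h1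
    have h2 := BP_snoc hp (act q x) n (xor s (q x))
    rw [← act_snoc] at h2
    have h4 := h1.sub_right (f k n (sec p (act q (x ++ [s]))))
    have h5 : f k n (sec q (x ++ [s])) ≡ - f k n (sec p (act q (x ++ [s]))) [ZMOD 2^n] := by
      simpa using h4.symm
    exact h5.trans h2.neg
  have h0 : q x = p (act q x) := by
    have := congrFun h x
    simpa [mul, one] using this
  refine (key true).trans (Int.ModEq.trans ?_ ((key false).symm.add_right _))
  apply meq
  rw [← h0]
  cases q x <;> simp [bi]

/-- words a^i (b a^k)^n -/
def E (k i : ℕ) (w : List Bool) : Prop := ∃ n : ℕ,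
      w = List.replicate i false ++
        (List.replicate n (true :: List.replicate k false)).flatten

open Classical in
noncomputable def pa (k i : ℕ) : List Bool → Bool := fun w => decide (E k i w)

theorem E_succ (k i : ℕ) (w : List Bool) : E k (i+1) (false :: w) ↔ E k i w := by
  simp [E, List.replicate_succ]

theorem E_succ' (k i : ℕ) (w : List Bool) : ¬ E k (i+1) (true :: w) := by
  simp [E, List.replicate_succ]

theorem E_succ_nil (k i : ℕ) : ¬ E k (i+1) [] := by
  simp [E, List.replicate_succ]

theorem E_zero (k : ℕ) (w : List Bool) : E k 0 (true :: w) ↔ E k k w := by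
  constructor
  · rintro ⟨n, hn⟩
    cases n with
    | zero => simp at hn
    | succ n => exact ⟨n, by simpa [List.replicate_succ] using hn⟩
  · rintro ⟨n, hn⟩
    exact ⟨n+1, by simpa [List.replicate_succ] using hn⟩

theorem E_zero' (k : ℕ) (w : List Bool) : ¬ E k 0 (false :: w) := by
  rintro ⟨n, hn⟩
  cases n with
  | zero => simp at hn
  | succ n => simp [List.replicate_succ] at hn

theorem E_zero_nil (k : ℕ) : E k 0 [] := ⟨0, by simp⟩

theorem pa_succ_nil (k i : ℕ) : pa k (i+1) [] = false := by simp [pa, E_succ_nil]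
theorem pa_zero_nil (k : ℕ) : pa k 0 [] = true := by simp [pa, E_zero_nil]
theorem sec_pa_succ_a (k i : ℕ) : sec (pa k (i+1)) [false] = pa k i := by
  funext w; simp [sec, pa, E_succ]
theorem sec_pa_succ_b (k i : ℕ) : sec (pa k (i+1)) [true] = one := by
  funext w; simp [sec, pa, E_succ', one]
theorem sec_pa_zero_a (k : ℕ) : sec (pa k 0) [false] = one := by
  funext w; simp [sec, pa, E_zero', one]
theorem sec_pa_zero_b (k : ℕ) : sec (pa k 0) [true] = pa k k := by
  funext w; simp [sec, pa, E_zero]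

theorem SS_succ (n : ℕ) (H : (List Bool → Bool) → ℤ) (p : List Bool → Bool) :
    S (n+1) (fun w => H (sec p w)) = S n (fun w => H (sec (sec p [false]) w)) +
      S n (fun w => H (sec (sec p [true]) w)) := by
  simp only [S, sec_sec, List.singleton_append]

theorem SS_one (n : ℕ) (H : (List Bool → Bool) → ℤ) (h : H one = 0) :
    S n (fun w => H (sec one w)) = 0 := by
  simp [sec_one, h, S_zero]

theorem SS_pa (k i n : ℕ) (H : (List Bool → Bool) → ℤ) (h : H one = 0) :
    S n (fun w => H (sec (pa k (i+n)) w)) = H (pa k i) := by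
  induction n with
  | zero => rfl
  | succ n ih =>
    rw [SS_succ, ← add_assoc, sec_pa_succ_a, sec_pa_succ_b, SS_one _ _ h, ih, add_zero]

theorem SS_pa0 (k n : ℕ) (H : (List Bool → Bool) → ℤ) (h : H one = 0) :
    S (n+1) (fun w => H (sec (pa k 0) w)) = S n (fun w => H (sec (pa k k) w)) := by
  rw [SS_succ, sec_pa_zero_a, sec_pa_zero_b, SS_one _ _ h, zero_add]

theorem f_succ (k n : ℕ) (p : List Bool → Bool) : f k (n+1) p =
    S k (fun w => (fun p' : List Bool → Bool => bi (p' []) + 2 * f k n (sec p' [false])) (sec p w)) := by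
  simp only [f, sec_sec]
  simp [sec]

theorem f_pa_k (k n : ℕ) : f k (n+1) (pa k k) = 1 := by
  rw [f_succ]
  have := SS_pa k 0 k (fun p' : List Bool → Bool => bi (p' []) + 2 * f k n (sec p' [false]))
    (by simp [one, sec_one, f_one, bi])
  rw [zero_add] at this
  rw [this]
  simp [pa_zero_nil, sec_pa_zero_a, f_one, bi]

theorem f_pa_lt (k n i : ℕ) (hi : i < k) : f k n (pa k i) = 0 := by
  induction n with
  | zero => rfl
  | succ n ih =>
    rw [f_succ]
    set H := (fun p' : List Bool → Bool => bi (p' []) + 2 * f k n (sec p' [false])) with hH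
    have h1 : H one = 0 := by simp [hH, one, sec_one, f_one, bi]
    obtain ⟨d, rfl⟩ : ∃ d, k = i + (d + 1) := ⟨k - i - 1, by omega⟩
    rw [S_S]
    simp only [← sec_sec]
    have h3 := SS_pa (i+(d+1)) 0 i
      (fun p' => S (d+1) (fun v => H (sec p' v))) (SS_one _ _ h1)
    rw [zero_add] at h3
    rw [h3, SS_pa0 _ _ _ h1]
    have h4 := SS_pa (i+(d+1)) (i+1) d H h1
    rw [show i + 1 + d = i + (d+1) by ring] at h4
    rw [h4, hH]
    simp [pa_succ_nil, sec_pa_succ_a, ih, bi]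

theorem f_pa (k i : ℕ) (hi : i ≤ k) (n : ℕ) :
    f k n (pa k i) ≡ (if i = k then 1 else 0) [ZMOD 2^n] := by
  split_ifs with h
  · subst h
    cases n with
    | zero => simp [f]; exact Int.modEq_one
    | succ n => rw [f_pa_k]
  · rw [f_pa_lt k n i (by omega)]

theorem BP_pa (k i : ℕ) (hi : i ≤ k) : BP k (pa k i) := by
  intro x n
  induction x generalizing i with
  | nil =>
    simp only [List.nil_append]
    cases i with
    | zero =>
      rw [sec_pa_zero_a, sec_pa_zero_b, f_one, pa_zero_nil]
      simpa [bi] using f_pa k k le_rfl n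
    | succ i =>
      rw [sec_pa_succ_a, sec_pa_succ_b, f_one, pa_succ_nil, f_pa_lt k n i (by omega)]
      simp [bi]
  | cons s x ih =>
    have e : ∀ (p : List Bool → Bool) (t : Bool), sec p (s :: x ++ [t]) = sec (sec p [s]) (x ++ [t]) := by
      intro p t; rw [sec_sec]; rfl
    have etwo : ∀ (p : List Bool → Bool), p (s :: x) = sec p [s] x := fun p => rfl
    rw [e, e, etwo (pa k i)]
    cases i with
    | zero =>
      cases s
      · rw [sec_pa_zero_a]; exact BP_one k x n
      · rw [sec_pa_zero_b]; exact ih k le_rfl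
    | succ i =>
      cases s
      · rw [sec_pa_succ_a]; exact ih i (by omega)
      · rw [sec_pa_succ_b]; exact BP_one k x n

end Pink
namespace Pink

def Gp (k : ℕ) (a : ℕ → Equiv.Perm (List Bool)) : Subgroup (Equiv.Perm (List Bool)) :=
  Subgroup.closure {g | ∃ i ≤ k, a i = g}

def HA (k : ℕ) (a : ℕ → Equiv.Perm (List Bool)) : Prop := ∀ i ≤ k, ∀ w, a i w = act (pa k i) w

theorem a_mem {k i : ℕ} (a : ℕ → Equiv.Perm (List Bool)) (hi : i ≤ k) : a i ∈ Gp k a :=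
  Subgroup.subset_closure ⟨i, hi, rfl⟩

/-- `g` has a portrait in `B` with `f`-value `c`. -/
def Fv (k : ℕ) (g : Equiv.Perm (List Bool)) (c : ℤ) : Prop :=
  ∃ p, BP k p ∧ (∀ w, g w = act p w) ∧ ∀ n, f k n p ≡ c [ZMOD 2^n]

theorem Fv_one (k : ℕ) : Fv k 1 0 :=
  ⟨one, BP_one k, fun w => by simp [act_one], fun n => by rw [f_one]⟩

theorem Fv_mul {k : ℕ} {g h : Equiv.Perm (List Bool)} {c d : ℤ} (hg : Fv k g c) (hh : Fv k h d) :
    Fv k (g * h) (c + d) := by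
  obtain ⟨p, hp, hgp, hc⟩ := hg
  obtain ⟨q, hq, hhq, hd⟩ := hh
  exact ⟨mul p q, BP_mul hp hq, fun w => by simp [act_mul, hgp, hhq],
    fun n => (f_hom hp q n).trans ((hc n).add (hd n))⟩

theorem Fv_inv {k : ℕ} {g : Equiv.Perm (List Bool)} {c : ℤ} (hg : Fv k g c) :
    Fv k g⁻¹ (-c) := by
  obtain ⟨p, hp, hgp, hc⟩ := hg
  have hq : ∀ w, g⁻¹ w = act (fun w => p (g⁻¹ w)) w := by
    intro w
    induction w using List.reverseRecOn with
    | nil =>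
      rw [Equiv.Perm.inv_eq_iff_eq, hgp]; simp [act]
    | append_singleton w s ih =>
      rw [Equiv.Perm.inv_eq_iff_eq, act_snoc, ← ih, hgp, act_snoc, ← hgp]
      simp
  have hpq : mul p (fun w => p (g⁻¹ w)) = one := by
    apply act_inj
    intro w
    rw [act_mul, ← hq, ← hgp, act_one]; simp
  refine ⟨_, BP_inv hp hpq, hq, fun n => ?_⟩
  have h1 := f_hom hp (fun w => p (g⁻¹ w)) n
  rw [hpq, f_one] at h1
  have h2 : f k n (fun w => p (g⁻¹ w)) ≡ - f k n p [ZMOD 2^n] := by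
    have := h1.sub_right (f k n p)
    simpa using this.symm
  exact h2.trans (hc n).neg

theorem Fv_a {k : ℕ} {a : ℕ → Equiv.Perm (List Bool)} (ha : HA k a) {i : ℕ} (hi : i ≤ k) :
    Fv k (a i) (if i = k then 1 else 0) :=
  ⟨pa k i, BP_pa k i hi, ha i hi, f_pa k i hi⟩

theorem exists_Fv {k : ℕ} {a : ℕ → Equiv.Perm (List Bool)} (ha : HA k a)
    {g : Equiv.Perm (List Bool)} (hg : g ∈ Gp k a) : ∃ c, Fv k g c := by
  induction hg using Subgroup.closure_induction with
  | mem x hx => obtain ⟨i, hi, rfl⟩ := hx; exact ⟨_, Fv_a ha hi⟩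
  | one => exact ⟨_, Fv_one k⟩
  | mul x y _ _ hx hy => obtain ⟨c, hc⟩ := hx; obtain ⟨d, hd⟩ := hy; exact ⟨_, Fv_mul hc hd⟩
  | inv x _ hx => obtain ⟨c, hc⟩ := hx; exact ⟨_, Fv_inv hc⟩

/-- pairs `(g,h)` realized in the stabilizer of level one -/
def K (k : ℕ) (a : ℕ → Equiv.Perm (List Bool)) :
    Subgroup (Equiv.Perm (List Bool) × Equiv.Perm (List Bool)) where
  carrier := {x | ∃ t ∈ Gp k a, ∀ w, t (false :: w) = false :: x.1 w ∧ t (true :: w) = true :: x.2 w}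
  one_mem' := ⟨1, one_mem _, by simp⟩
  mul_mem' := by
    rintro x y ⟨s, hs, hx⟩ ⟨t, ht, hy⟩
    exact ⟨s * t, mul_mem hs ht, fun w => by simp [hx, hy]⟩
  inv_mem' := by
    rintro x ⟨s, hs, hx⟩
    refine ⟨s⁻¹, inv_mem hs, fun w => ⟨?_, ?_⟩⟩
    · rw [Equiv.Perm.inv_eq_iff_eq, (hx _).1]; simp
    · rw [Equiv.Perm.inv_eq_iff_eq, (hx _).2]; simp

section
variable {k : ℕ} {a : ℕ → Equiv.Perm (List Bool)} (ha : HA k a)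

theorem a_succ_false (ha : HA k a) {i : ℕ} (hi : i + 1 ≤ k) (w : List Bool) :
    a (i+1) (false :: w) = false :: a i w := by
  rw [ha _ hi, act_cons, pa_succ_nil, sec_pa_succ_a, ha i (by omega)]; rfl

theorem a_succ_true (ha : HA k a) {i : ℕ} (hi : i + 1 ≤ k) (w : List Bool) :
    a (i+1) (true :: w) = true :: w := by
  rw [ha _ hi, act_cons, pa_succ_nil, sec_pa_succ_b, act_one]; rfl

theorem a_zero_false (ha : HA k a) (w : List Bool) : a 0 (false :: w) = true :: w := by
  rw [ha _ (Nat.zero_le _), act_cons, pa_zero_nil, sec_pa_zero_a, act_one]; rfl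

theorem a_zero_true (ha : HA k a) (w : List Bool) : a 0 (true :: w) = false :: a k w := by
  rw [ha _ (Nat.zero_le _), act_cons, pa_zero_nil, sec_pa_zero_b, ha k le_rfl]; rfl

theorem K_left (ha : HA k a) {i : ℕ} (hi : i + 1 ≤ k) : (a i, 1) ∈ K k a :=
  ⟨a (i+1), a_mem a hi, fun w => ⟨a_succ_false ha hi w, a_succ_true ha hi w⟩⟩

theorem K_right (ha : HA k a) {i : ℕ} (hi : i + 1 ≤ k) : (1, a i) ∈ K k a := by
  have h0 := a_mem a (Nat.zero_le k)
  have e : ∀ w, (a 0)⁻¹ (true :: w) = false :: w := fun w => by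
    rw [Equiv.Perm.inv_eq_iff_eq, a_zero_false ha]
  have etwo : ∀ w, a 0 (true :: (a k)⁻¹ w) = false :: w := fun w => by
    rw [a_zero_true ha]; simp
  have einv : ∀ w, (a 0)⁻¹ (false :: w) = true :: (a k)⁻¹ w := fun w => by
    rw [Equiv.Perm.inv_eq_iff_eq, etwo]
  refine ⟨a 0 * a (i+1) * (a 0)⁻¹, mul_mem (mul_mem h0 (a_mem a hi)) (inv_mem h0), fun w => ⟨?_, ?_⟩⟩
  · simp only [Equiv.Perm.mul_apply, einv, a_succ_true ha hi, etwo]; rfl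
  · simp only [Equiv.Perm.mul_apply, e, a_succ_false ha hi, a_zero_false ha]

theorem K_k (ha : HA k a) : (a k, a k) ∈ K k a :=
  ⟨a 0 * a 0, mul_mem (a_mem a (Nat.zero_le k)) (a_mem a (Nat.zero_le k)), fun w => by
    simp [a_zero_false ha, a_zero_true ha]⟩

theorem K_proj (ha : HA k a) {g : Equiv.Perm (List Bool)} (hg : g ∈ Gp k a) :
    (∃ h, (g, h) ∈ K k a) ∧ (∃ h, (h, g) ∈ K k a) := by
  induction hg using Subgroup.closure_induction with
  | mem x hx =>
    obtain ⟨i, hi, rfl⟩ := hx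
    rcases hi.lt_or_eq with h | rfl
    · exact ⟨⟨_, K_left ha h⟩, ⟨_, K_right ha h⟩⟩
    · exact ⟨⟨_, K_k ha⟩, ⟨_, K_k ha⟩⟩
  | one => exact ⟨⟨1, one_mem _⟩, ⟨1, one_mem _⟩⟩
  | mul x y _ _ hx hy =>
    obtain ⟨⟨c, hc⟩, ⟨d, hd⟩⟩ := hx
    obtain ⟨⟨c', hc'⟩, ⟨d', hd'⟩⟩ := hy
    exact ⟨⟨_, mul_mem hc hc'⟩, ⟨_, mul_mem hd hd'⟩⟩
  | inv x _ hx =>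
    obtain ⟨⟨c, hc⟩, ⟨d, hd⟩⟩ := hx
    exact ⟨⟨_, inv_mem hc⟩, ⟨_, inv_mem hd⟩⟩

def Nn (k : ℕ) (a : ℕ → Equiv.Perm (List Bool)) : Subgroup (Equiv.Perm (List Bool)) :=
  (K k a).comap (MonoidHom.inl _ _) ⊓ (K k a).comap (MonoidHom.inr _ _)

theorem mem_Nn {n : Equiv.Perm (List Bool)} : n ∈ Nn k a ↔ (n, 1) ∈ K k a ∧ (1, n) ∈ K k a := by
  simp [Nn, Subgroup.mem_inf]

theorem Nn_conj (ha : HA k a) {n g : Equiv.Perm (List Bool)} (hn : n ∈ Nn k a) (hg : g ∈ Gp k a) :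
    g * n * g⁻¹ ∈ Nn k a := by
  rw [mem_Nn] at *
  obtain ⟨⟨c, hc⟩, ⟨d, hd⟩⟩ := K_proj ha hg
  constructor
  · have := mul_mem (mul_mem hc hn.1) (inv_mem hc)
    simpa using this
  · have := mul_mem (mul_mem hd hn.2) (inv_mem hd)
    simpa using this

theorem decomp (ha : HA k a) {g : Equiv.Perm (List Bool)} (hg : g ∈ Gp k a) :
    ∃ n ∈ Nn k a, ∃ c : ℤ, g = n * a k ^ c ∧ Fv k g c := by
  have hk := a_mem a (le_refl k)
  induction hg using Subgroup.closure_induction with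
  | mem x hx =>
    obtain ⟨i, hi, rfl⟩ := hx
    have h1 := Fv_a ha hi
    rcases hi.lt_or_eq with h | rfl
    · rw [if_neg h.ne] at h1
      exact ⟨a i, mem_Nn.2 ⟨K_left ha h, K_right ha h⟩, 0, by simp, h1⟩
    · rw [if_pos rfl] at h1
      exact ⟨1, one_mem _, 1, by simp, h1⟩
  | one => exact ⟨1, one_mem _, 0, by simp, Fv_one k⟩
  | mul x y _ _ hx hy =>
    obtain ⟨n, hn, c, rfl, hc⟩ := hx
    obtain ⟨m, hm, d, rfl, hd⟩ := hy
    exact ⟨n * (a k ^ c * m * (a k ^ c)⁻¹), mul_mem hn (Nn_conj ha hm (zpow_mem hk _)), c + d,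
      by rw [zpow_add]; group, Fv_mul hc hd⟩
  | inv x _ hx =>
    obtain ⟨n, hn, c, rfl, hc⟩ := hx
    refine ⟨a k ^ (-c) * n⁻¹ * (a k ^ (-c))⁻¹, Nn_conj ha (inv_mem hn) (zpow_mem hk _), -c,
      by group, Fv_inv hc⟩

def Fix (g : Equiv.Perm (List Bool)) (L : ℕ) : Prop := ∀ w : List Bool, w.length ≤ L → g w = w

theorem Fix_nil (g : Equiv.Perm (List Bool)) (L : ℕ) (h0 : g [] = [])
    (h : ∀ s, ∀ w : List Bool, w.length ≤ L → g (s :: w) = s :: w) : Fix g (L+1) := by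
  intro w hw
  cases w with
  | nil => exact h0
  | cons s w => exact h s w (by simpa using hw)

theorem pow_nil (ha : HA k a) {i : ℕ} (hi : i ≤ k) (e : ℕ) : (a i ^ e) [] = [] := by
  induction e with
  | zero => rfl
  | succ e ih => rw [pow_succ, Equiv.Perm.mul_apply, ha i hi, act, ih]

theorem Fix_succ (ha : HA k a) {i : ℕ} (hi : i + 1 ≤ k) (e L : ℕ) (h : Fix (a i ^ e) L) :
    Fix (a (i+1) ^ e) (L+1) := by
  apply Fix_nil _ _ (pow_nil ha hi e)
  have h1 : ∀ w, (a (i+1) ^ e) (false :: w) = false :: (a i ^ e) w := by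
    clear h
    induction e with
    | zero => intro w; rfl
    | succ e ih => intro w; simp only [pow_succ, Equiv.Perm.mul_apply, a_succ_false ha hi, ih]
  have h2 : ∀ w, (a (i+1) ^ e) (true :: w) = true :: w := by
    clear h h1
    induction e with
    | zero => intro w; rfl
    | succ e ih => intro w; simp only [pow_succ, Equiv.Perm.mul_apply, a_succ_true ha hi, ih]
  intro s w hw
  cases s
  · rw [h1, h w hw]
  · rw [h2]

theorem Fix_up (ha : HA k a) (i : ℕ) (hi : i ≤ k) (e L : ℕ) (h : Fix (a 0 ^ e) L) :
    Fix (a i ^ e) (L+i) := by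
  induction i with
  | zero => exact h
  | succ i ih => exact Fix_succ ha hi e (L+i) (ih (by omega))

theorem Fix_double (ha : HA k a) (e L : ℕ) (h : Fix (a k ^ e) L) : Fix (a 0 ^ (2*e)) (L+1) := by
  apply Fix_nil _ _ (pow_nil ha (Nat.zero_le _) _)
  have h1 : ∀ s w, (a 0 ^ (2*e)) (s :: w) = s :: (a k ^ e) w := by
    clear h
    induction e with
    | zero => intro s w; rfl
    | succ e ih =>
      intro s w
      rw [Nat.mul_succ, pow_succ, pow_succ, pow_succ]
      simp only [Equiv.Perm.mul_apply]
      cases s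
      · rw [a_zero_false ha, a_zero_true ha, ih]
      · rw [a_zero_true ha, a_zero_false ha, ih]
  intro s w hw
  rw [h1, h w hw]

theorem Fix_pow (ha : HA k a) (n : ℕ) : Fix (a k ^ (2^n)) (n * (k+1) + k) := by
  induction n with
  | zero =>
    have : Fix (a 0 ^ 1) 0 := by
      intro w hw
      have : w = [] := by simpa using hw
      subst this; exact pow_nil ha (Nat.zero_le _) _
    simpa using Fix_up ha k le_rfl 1 0 this
  | succ n ih =>
    have := Fix_up ha k le_rfl _ _ (Fix_double ha _ _ ih)
    rw [← pow_succ'] at this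
    convert this using 1
    ring

theorem Fix_zpow {g : Equiv.Perm (List Bool)} {L : ℕ} (h : Fix g L) (c : ℤ) : Fix (g ^ c) L := by
  intro w hw
  exact Equiv.Perm.zpow_apply_eq_self_of_apply_eq_self (h w hw) c

theorem approx_aux (ha : HA k a) (m : ℕ)
    (ih : ∀ p, BP k p → ∃ t ∈ Gp k a, ∀ w : List Bool, w.length ≤ m → act p w = t w)
    (p : List Bool → Bool) (hp : BP k p) (h0 : p [] = false) :
    ∃ t ∈ Gp k a, ∀ w : List Bool, w.length ≤ m + 1 → act p w = t w := by
  obtain ⟨g, hg, hgw⟩ := ih _ (BP_sec hp [false])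
  obtain ⟨h, hh, hhw⟩ := ih _ (BP_sec hp [true])
  obtain ⟨n, hn, c, hgn, pg, hpg, hgpg, hgf⟩ := decomp ha hg
  obtain ⟨n', hn', d, hhn, ph, hph, hhph, hhf⟩ := decomp ha hh
  set N := m / (k+1) with hN
  have hNm : N * (k+1) ≤ m := Nat.div_mul_le_self m (k+1)
  have hmN : m ≤ N * (k+1) + k := by
    have h1 := Nat.div_add_mod m (k+1)
    have h2 := Nat.mod_lt m (show k + 1 > 0 by omega)
    rw [← hN, mul_comm] at h1
    omega
  have e1 : f k N (sec p [false]) = f k N pg := by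
    apply f_congr
    intro w hw
    exact act_inj_aux (L := m) (fun w hw => by rw [hgw w hw, hgpg]) w (by omega)
  have e2 : f k N (sec p [true]) = f k N ph := by
    apply f_congr
    intro w hw
    exact act_inj_aux (L := m) (fun w hw => by rw [hhw w hw, hhph]) w (by omega)
  have e3 := hp [] N
  simp only [List.nil_append] at e3
  rw [h0, e1, e2] at e3
  simp only [bi, Bool.false_eq_true, if_false, add_zero] at e3
  have e4 : d ≡ c [ZMOD 2^N] := (hhf N).symm.trans (e3.trans (hgf N))
  obtain ⟨z, hz⟩ := e4.dvd
  have hfix : ∀ w : List Bool, w.length ≤ m → (a k ^ c) w = (a k ^ d) w := by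
    intro w hw
    have : c = d + 2^N * z := by linarith
    have h1 := Fix_zpow (Fix_pow ha N) z w (by omega)
    rw [this, zpow_add, Equiv.Perm.mul_apply, zpow_mul]
    congr 1
  have hK : (n * a k ^ d, n' * a k ^ d) ∈ K k a := by
    have h1 := mul_mem (mul_mem (mem_Nn.1 hn).1 (mem_Nn.1 hn').2) (zpow_mem (K_k ha) d)
    simpa using h1
  obtain ⟨t, ht, htw⟩ := hK
  refine ⟨t, ht, ?_⟩
  intro w hw
  cases w with
  | nil =>
    obtain ⟨c, q, _, hq, _⟩ := exists_Fv ha ht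
    rw [hq]; simp [act]
  | cons s w =>
    have hw' : w.length ≤ m := by simpa using hw
    rw [act_cons, h0]
    cases s
    · rw [(htw w).1, hgw w hw', hgn]
      simp [hfix w hw']
    · rw [(htw w).2, hhw w hw', hhn]
      simp

theorem approx (ha : HA k a) (m : ℕ) : ∀ p, BP k p →
    ∃ t ∈ Gp k a, ∀ w : List Bool, w.length ≤ m → act p w = t w := by
  induction m with
  | zero =>
    intro p _
    refine ⟨1, one_mem _, fun w hw => ?_⟩
    have : w = [] := by simpa using hw
    subst this; simp [act]
  | succ m ih =>
    intro p hp
    cases h0 : p [] with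
    | false => exact approx_aux ha m ih p hp h0
    | true =>
      obtain ⟨t, ht, htw⟩ := approx_aux ha m ih (mul (pa k 0) p)
        (BP_mul (BP_pa k 0 (Nat.zero_le _)) hp) (by simp [mul, act, h0, pa_zero_nil])
      refine ⟨(a 0)⁻¹ * t, mul_mem (inv_mem (a_mem a (Nat.zero_le _))) ht, fun w hw => ?_⟩
      rw [Equiv.Perm.mul_apply, ← htw w hw, act_mul, eq_comm, Equiv.Perm.inv_eq_iff_eq,
        ha 0 (Nat.zero_le _)]

theorem BP_of_approx (ha : HA k a) (p : List Bool → Bool)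
    (h : ∀ m, 1 ≤ m → ∃ t ∈ Gp k a, ∀ w : List Bool, w.length ≤ m → act p w = t w) : BP k p := by
  intro x n
  obtain ⟨t, ht, htw⟩ := h (n * (k+1) + x.length + 1) (by omega)
  obtain ⟨c, q, hq, hqt, _⟩ := exists_Fv ha ht
  have e : ∀ w : List Bool, w.length < n * (k+1) + x.length + 1 → p w = q w :=
    act_inj_aux (fun w hw => by rw [htw w hw, hqt])
  have e2 : ∀ s, f k n (sec p (x ++ [s])) = f k n (sec q (x ++ [s])) := by
    intro s
    apply f_congr
    intro w hw
    apply e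
    simp
    omega
  rw [e2, e2, e x (by omega)]
  exact hq x n

end

end Pink
namespace Pink

def U : (ℕ → Bool) → ℕ → (List Bool → ℤ) → ℤ
  | _, 0, F => F []
  | c, n+1, F => U (fun j => c (j+1)) n (fun w => F (false :: w)) +
      if c 0 then 0 else U (fun j => c (j+1)) n (fun w => F (true :: w))

theorem W_U (c : ℕ → Bool) (n : ℕ) (F : List Bool → ℤ) :
    ∑ s : Fin n → Bool, (if ∀ j : Fin n, c j = true → s j = false then F (List.ofFn s) else 0)
      = U c n F := by
  induction n generalizing c F with
  | zero => simp [U]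
  | succ n ih =>
    rw [← (Fin.consEquiv (fun _ => Bool)).sum_comp, Fintype.sum_prod_type, Fintype.sum_bool,
      U, ← ih, ← ih, add_comm]
    congr 1
    · apply Finset.sum_congr rfl
      intro s _
      simp [Fin.consEquiv, Fin.forall_fin_succ, List.ofFn_succ]
    · cases h : c 0
      · simp [Fin.consEquiv, Fin.forall_fin_succ, List.ofFn_succ, h]
      · simp [Fin.consEquiv, Fin.forall_fin_succ, List.ofFn_succ, h]

theorem U_split (c : ℕ → Bool) (m n : ℕ) (F : List Bool → ℤ) (h : ∀ j < m, c j = false) :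
    U c (m + n) F = S m (fun w => U (fun j => c (j + m)) n (fun v => F (w ++ v))) := by
  induction m generalizing c F with
  | zero => simp [S]
  | succ m ih =>
    rw [Nat.succ_add]
    simp only [U, S]
    rw [h 0 (by omega), ih _ _ (fun j hj => h (j+1) (by omega)),
      ih _ _ (fun j hj => h (j+1) (by omega))]
    simp only [Bool.false_eq_true, if_false, List.cons_append]
    have : ∀ j, j + m + 1 = j + (m+1) := fun j => by ring
    simp only [this]

def cc (r : ℕ) : ℕ → Bool := fun j => decide (r ∣ j + 1)

def gg (k i : ℕ) (F : List Bool → ℤ) : ℤ := U (cc (k+1)) ((k+1) * (i+1) - 1) F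

theorem cc_lt (k : ℕ) : ∀ j < k, cc (k+1) j = false := by
  intro j hj
  simp only [cc, decide_eq_false_iff_not]
  intro h
  have := Nat.le_of_dvd (by omega) h
  omega

theorem gg_zero (k : ℕ) (F : List Bool → ℤ) : gg k 0 F = S k F := by
  have := U_split (cc (k+1)) k 0 F (cc_lt k)
  simpa [gg, U] using this

theorem gg_succ (k i : ℕ) (F : List Bool → ℤ) :
    gg k (i+1) F = S k (fun w => gg k i (fun v => F (w ++ [false] ++ v))) := by
  have h1 : (k+1) * (i+1+1) - 1 = k + (((k+1)*(i+1) - 1) + 1) := by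
    have : 0 < (k+1) * (i+1) := by positivity
    rw [Nat.mul_succ (k+1) (i+1)]
    omega
  rw [gg, h1, U_split _ _ _ _ (cc_lt k)]
  apply S_congr
  intro w _
  have h2 : (fun j => cc (k+1) (j + 1 + k)) = cc (k+1) := by
    funext j
    simp only [cc]
    rw [decide_eq_decide, show j + 1 + k + 1 = (j + 1) + (k + 1) by ring]
    simp
  have h3 : cc (k+1) (0 + k) = true := by simp [cc]
  simp only [U, h2, h3, if_true, add_zero, gg]
  simp

theorem S_sum (k n : ℕ) (F : ℕ → List Bool → ℤ) :
    S k (fun w => ∑ i ∈ Finset.range n, F i w) = ∑ i ∈ Finset.range n, S k (F i) := by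
  induction n with
  | zero => simp [S_zero]
  | succ n ih => simp only [Finset.sum_range_succ, S_add, ih]

theorem f_eq (k n : ℕ) (p : List Bool → Bool) :
    f k n p = ∑ i ∈ Finset.range n, 2^i * gg k i (fun w => bi (p w)) := by
  induction n generalizing p with
  | zero => simp [f]
  | succ n ih =>
    rw [Finset.sum_range_succ', f, S_add, S_mul]
    simp only [ih]
    rw [S_sum, Finset.mul_sum, pow_zero, one_mul, gg_zero, add_comm]
    congr 1
    apply Finset.sum_congr rfl
    intro i _
    rw [S_mul, gg_succ, pow_succ']
    simp only [sec]
    ring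

theorem Wset_sum (k i : ℕ) (F : List Bool → ℤ) :
    ∑ w ∈ Wset (k+1) (i+1), F w = gg k i F := by
  rw [Wset, Finset.sum_image (fun x _ y _ h => List.ofFn_injective h), Finset.sum_filter, gg, ← W_U]
  apply Finset.sum_congr rfl
  intro s _
  simp [cc]

theorem Qr_eq (k : ℕ) (σ : List Bool → List Bool) (p : List Bool → Bool)
    (hp : ∀ x, (par σ x : ℤ) = bi (p x)) (x : List Bool) (n : ℕ) :
    (2:ℤ_[2])^(n+1) ∣ Qr (k+1) σ x - ((2 * f k n (sec p x) : ℤ) : ℤ_[2]) := by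
  have hs : ∀ i, ∑ w ∈ Wset (k+1) (i+1), (par σ (x ++ w) : ℤ_[2]) =
      ((gg k i (fun w => bi (sec p x w)) : ℤ) : ℤ_[2]) := by
    intro i
    rw [← Wset_sum]
    push_cast
    apply Finset.sum_congr rfl
    intro w _
    simp only [sec]
    rw [← hp]
    simp
  have hsum : ∀ u : ℕ → ℤ_[2], Summable (fun i : ℕ => (2:ℤ_[2])^(i+1) * u i) := by
    intro u
    have h2 : ‖(2:ℤ_[2])‖ = 1/2 := by
      have := PadicInt.norm_p (p := 2)
      simpa using this
    apply Summable.of_norm_bounded (g := fun i : ℕ => (1/2:ℝ)^i) summable_geometric_two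
    intro i
    rw [norm_mul, norm_pow, h2, pow_succ]
    have h3 := PadicInt.norm_le_one (u i)
    have h4 : (0:ℝ) < (1/2)^i := by positivity
    have h5 := norm_nonneg (u i)
    nlinarith
  rw [Qr]
  simp only [hs]
  rw [← (hsum _).sum_add_tsum_nat_add n]
  have h1 : ((2 * f k n (sec p x) : ℤ) : ℤ_[2]) = ∑ i ∈ Finset.range n,
      (2:ℤ_[2])^(i+1) * ((gg k i (fun w => bi (sec p x w)) : ℤ) : ℤ_[2]) := by
    rw [f_eq, Finset.mul_sum]
    push_cast
    apply Finset.sum_congr rfl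
    intro i _
    ring
  rw [h1, add_sub_cancel_left]
  have h2 : ∀ i, (2:ℤ_[2])^(i+n+1) * ((gg k (i+n) (fun w => bi (sec p x w)) : ℤ) : ℤ_[2]) =
      (2:ℤ_[2])^n * ((2:ℤ_[2])^(i+1) * ((gg k (i+n) (fun w => bi (sec p x w)) : ℤ) : ℤ_[2])) := by
    intro i; ring
  have h3 : ∀ i, (2:ℤ_[2])^(i+n+1) * ((gg k (i+n) (fun w => bi (sec p x w)) : ℤ) : ℤ_[2]) =
      (2:ℤ_[2])^(n+1) * ((2:ℤ_[2])^i * ((gg k (i+n) (fun w => bi (sec p x w)) : ℤ) : ℤ_[2])) := by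
    intro i; ring
  have h4 : Summable (fun i : ℕ => (2:ℤ_[2])^i * ((gg k (i+n) (fun w => bi (sec p x w)) : ℤ) : ℤ_[2])) := by
    rw [← summable_nat_add_iff 1]
    exact hsum (fun i => ((gg k (i+1+n) (fun w => bi (sec p x w)) : ℤ) : ℤ_[2]))
  simp only [h3]
  rw [h4.tsum_mul_left]
  exact dvd_mul_right _ _

theorem eq_zero_of_dvd (x : ℤ_[2]) (h : ∀ n : ℕ, (2:ℤ_[2])^(n+1) ∣ x) : x = 0 := by
  by_contra hx
  have h1 := (PadicInt.norm_le_pow_iff_le_valuation x hx (x.valuation + 1)).1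
    ((PadicInt.norm_le_pow_iff_mem_span_pow x _).2
      (Ideal.mem_span_singleton.2 (by simpa using h x.valuation)))
  omega

theorem Pr_iff (k : ℕ) (σ : List Bool → List Bool) (p : List Bool → Bool)
    (hp : ∀ x, (par σ x : ℤ) = bi (p x)) (x : List Bool) :
    Pr (k+1) σ x = 1 ↔ ∀ n, f k n (sec p (x ++ [true])) ≡
      f k n (sec p (x ++ [false])) + bi (p x) [ZMOD 2^n] := by
  have hpar : (-1:ℤ_[2])^(par σ x) = 1 - 2 * ((bi (p x) : ℤ) : ℤ_[2]) := by
    have := hp x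
    cases h : p x
    · have h0 : par σ x = 0 := by simpa [h, bi] using this
      simp [h0, bi]
    · have h0 : par σ x = 1 := by
        rw [h] at this; simp only [bi, if_true] at this; exact_mod_cast this
      simp [h0, bi]; norm_num
  have key : ∀ n, (2:ℤ_[2])^(n+1) ∣ Pr (k+1) σ x - 1 ↔ f k n (sec p (x ++ [true])) ≡
      f k n (sec p (x ++ [false])) + bi (p x) [ZMOD 2^n] := by
    intro n
    have h1 := Qr_eq k σ p hp (x ++ [true]) n
    have h2 := Qr_eq k σ p hp (x ++ [false]) n
    have h3 := dvd_sub h1 h2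
    have e : Pr (k+1) σ x - 1 = (Qr (k+1) σ (x ++ [true]) -
        ((2 * f k n (sec p (x ++ [true])) : ℤ) : ℤ_[2]) - (Qr (k+1) σ (x ++ [false]) -
        ((2 * f k n (sec p (x ++ [false])) : ℤ) : ℤ_[2]))) +
        2 * ((f k n (sec p (x ++ [true])) - (f k n (sec p (x ++ [false])) + bi (p x)) : ℤ) : ℤ_[2]) := by
      rw [Pr, hpar]; push_cast; ring
    rw [e, dvd_add_right h3, pow_succ', mul_dvd_mul_iff_left two_ne_zero]
    have h4 := PadicInt.pow_p_dvd_int_iff (p := 2) n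
      (f k n (sec p (x ++ [true])) - (f k n (sec p (x ++ [false])) + bi (p x)))
    rw [Int.modEq_comm, Int.modEq_iff_dvd]
    exact_mod_cast h4
  constructor
  · intro h n
    rw [← key, h, sub_self]
    exact dvd_zero _
  · intro h
    exact sub_eq_zero.1 (eq_zero_of_dvd _ fun n => (key n).2 (h n))

theorem Bset_iff (k : ℕ) (σ : List Bool → List Bool) (hσ : IsTreeAut σ) (p : List Bool → Bool)
    (hp : ∀ x, (par σ x : ℤ) = bi (p x)) : σ ∈ Bset (k+1) ↔ BP k p := by
  constructor
  · rintro ⟨⟨_, h1⟩, h2⟩ x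
    exact (Pr_iff k σ p hp x).1 ((h1 x []).trans h2)
  · intro h
    have h1 : ∀ x, Pr (k+1) σ x = 1 := fun x => (Pr_iff k σ p hp x).2 (h x)
    exact ⟨⟨hσ, fun x y => by rw [h1, h1]⟩, h1 []⟩

theorem treeAut_act (σ : List Bool → List Bool) (hσ : IsTreeAut σ) (p : List Bool → Bool)
    (hp : ∀ x, par σ x = 1 ↔ p x = true) : ∀ w, σ w = act p w := by
  obtain ⟨hb, hl, hc⟩ := hσ
  intro w
  induction w using List.reverseRecOn with
  | nil => have := hl []; simpa [act] using this
  | append_singleton w s ih =>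
    rw [act_snoc, ← ih]
    obtain ⟨t, ht⟩ := hc w false
    obtain ⟨u, hu⟩ := hc w true
    have hne : t ≠ u := by
      rintro rfl
      have := hb.1 (ht.trans hu.symm)
      simp at this
    have hpt : t = p w := by
      have := hp w
      simp only [par, ht] at this
      cases t <;> cases hq : p w <;> simp [hq] at this ⊢
    cases s
    · rw [ht, hpt]; simp
    · rw [hu, ← hpt]
      cases t <;> cases u <;> simp_all

theorem par_bi (σ : List Bool → List Bool) (p : List Bool → Bool)
    (hp : ∀ x, par σ x = 1 ↔ p x = true) (x : List Bool) : (par σ x : ℤ) = bi (p x) := by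
  have := hp x
  have h : par σ x = 0 ∨ par σ x = 1 := by simp only [par]; split_ifs <;> simp
  rcases h with h | h
  · rw [h] at this ⊢; cases hx : p x <;> simp_all [bi]
  · rw [h] at this ⊢; cases hx : p x <;> simp_all [bi]

end Pink

/-- Fix `r ≥ 1`, and for `i ∈ {1,…,r}` (here indexed by `i : Fin r`,
corresponding to the generator `α_{i+1}`) let `α i` be the automorphism of `T_∞`
determined by `Par(α i, w) = 1` iff `w = a^{i}(ba^{r−1})^n` for some `n ≥ 0`.
Then `B_{r,∞}` is the closure of the subgroup generated by `α_1, …, α_r` in the topology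
of pointwise convergence: a tree automorphism `σ` lies in `B_{r,∞}` iff for every `m ≥ 1`
there is an element `τ` of the subgroup generated by the `α i` agreeing with `σ` on all
words of length at most `m`. -/
theorem B_eq_closure_Pink (r : ℕ) (hr : 1 ≤ r) (α : Fin r → Equiv.Perm (List Bool))
    (hαaut : ∀ i : Fin r, IsTreeAut ⇑(α i))
    (hpar : ∀ (i : Fin r) (w : List Bool), (par ⇑(α i) w = 1 ↔ ∃ n : ℕ,
      w = List.replicate (i : ℕ) false ++
        (List.replicate n (true :: List.replicate (r-1) false)).flatten))
    (σ : Equiv.Perm (List Bool)) (hσ : IsTreeAut ⇑σ) :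
    ⇑σ ∈ Bset r ↔ ∀ m : ℕ, 1 ≤ m → ∃ τ ∈ Subgroup.closure (Set.range α),
      ∀ w : List Bool, w.length ≤ m → σ w = τ w := by

  obtain ⟨k, rfl⟩ : ∃ k, r = k + 1 := ⟨r - 1, by omega⟩
  let a : ℕ → Equiv.Perm (List Bool) := fun i => if h : i < k + 1 then α ⟨i, h⟩ else 1
  have hG : Subgroup.closure (Set.range α) = Pink.Gp k a := by
    unfold Pink.Gp
    congr 1
    ext g
    constructor
    · rintro ⟨i, rfl⟩
      exact ⟨i, by omega, dif_pos i.2⟩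
    · rintro ⟨i, hi, rfl⟩
      exact ⟨⟨i, by omega⟩, by symm; exact dif_pos (Nat.lt_succ_of_le hi)⟩
  have ha : Pink.HA k a := by
    intro i hi w
    have hi' : i < k + 1 := by omega
    have h1 : a i = α ⟨i, hi'⟩ := dif_pos hi'
    rw [h1]
    apply Pink.treeAut_act _ (hαaut _)
    intro x
    rw [hpar]
    exact (@decide_eq_true_iff _ (_)).symm
  let p : List Bool → Bool := fun x => decide (par σ x = 1)
  have hp : ∀ x, par σ x = 1 ↔ p x = true := fun x => by simp [p]
  have hact := Pink.treeAut_act σ hσ p hp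
  rw [Pink.Bset_iff k σ hσ p (Pink.par_bi σ p hp), hG]
  simp only [hact]
  exact ⟨fun h m _ => Pink.approx ha m p h, Pink.BP_of_approx ha p⟩
end

section
/- Fix integers r ≥ 1 and n ≥ r + 1, and set L := ⌊(n−1)/r⌋. Let S be the set of automorphisms σ of the finite binary rooted tree T_n such that: (i) σ fixes every word of length at most n−1 (equivalently, Par(σ, y) = 0 for every word y of length at most n−2); and (ii) for every i ∈ {1, …, L} and every word x of length n−1−ri, the integer Σ_{w ∈ W(r,i)} Par(σ, xbw) − Σ_{w ∈ W(r,i)} Par(σ, xaw) is even. Then the cardinality of S equals 2 raised to the power 2^{n−1} − Σ_{i=1}^{L} 2^{n−1−ir}. -/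
/-- Nodes of the binary rooted tree `T_n` of height `n`: words over `{a,b}`
(encoded `a = false`, `b = true`) of length at most `n`. -/
def NodeN (n : ℕ) : Type := {w : List Bool // w.length ≤ n}

/-- An automorphism of the finite binary rooted tree `T_n`: a length-preserving bijection
of the words of length `≤ n` sending the children of `w` onto the children of `σ w`
for every word `w` of length `< n`. -/
def IsAutN (n : ℕ) (σ : NodeN n → NodeN n) : Prop :=
  Function.Bijective σ ∧ (∀ w : NodeN n, (σ w).1.length = w.1.length) ∧
    ∀ (w : List Bool) (hw : w.length < n) (s : Bool),
      ∃ t : Bool, (σ ⟨w ++ [s], by simpa using hw⟩).1 = (σ ⟨w, hw.le⟩).1 ++ [t]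

/-- The parity `Par(σ,x) ∈ {0,1}` of an automorphism of `T_n` at a word `x` of length
`< n`: `0` if `σ(xa) = σ(x)a`, and `1` otherwise (junk value `0` if `x.length ≥ n`). -/
def parN (n : ℕ) (σ : NodeN n → NodeN n) (x : List Bool) : ℕ :=
  if h : x.length < n then
    (if (σ ⟨x ++ [false], by simpa using h⟩).1 = (σ ⟨x, h.le⟩).1 ++ [false] then 0 else 1)
  else 0

namespace CardS

/-- Words of length `m`. -/
abbrev Vec (m : ℕ) : Type := {l : List Bool // l.length = m}

instance (m : ℕ) : Fintype (Vec m) := inferInstanceAs (Fintype (List.Vector Bool m))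

lemma card_Vec (m : ℕ) : Fintype.card (Vec m) = 2 ^ m := by
  have := card_vector (α := Bool) m
  rw [Fintype.card_bool] at this
  exact this

/-- Unitriangular systems of functionals are surjective. -/
lemma surj_of_tri {V J : Type*} [AddCommGroup V] [Module (ZMod 2) V] [Fintype J] [DecidableEq J]
    (Φ : V →ₗ[ZMod 2] (J → ZMod 2)) (ρ : J → ℕ) (v : J → V)
    (h1 : ∀ j, Φ (v j) j = 1)
    (h0 : ∀ j j', j' ≠ j → ρ j ≤ ρ j' → Φ (v j) j' = 0) :
    Function.Surjective Φ := by
  have key : ∀ k : ℕ, ∀ j, ρ j < k → (Pi.single j 1 : J → ZMod 2) ∈ LinearMap.range Φ := by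
    intro k
    induction k with
    | zero => intro j hj; omega
    | succ k ih =>
      intro j hj
      have e : (Pi.single j 1 : J → ZMod 2) = Φ (v j) -
          ∑ j' ∈ Finset.univ.filter (fun j' => ρ j' < ρ j), Φ (v j) j' • Pi.single j' (1 : ZMod 2) := by
        funext t
        simp only [Pi.sub_apply, Finset.sum_apply, Pi.smul_apply, smul_eq_mul]
        by_cases ht : ρ t < ρ j
        · have htj : t ≠ j := by rintro rfl; omega
          rw [Finset.sum_eq_single t]
          · simp [htj]
          · intro b _ hb; simp [hb.symm]
          · intro h; simp [ht] at h
        · rw [Finset.sum_eq_zero]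
          · by_cases htj : t = j
            · subst htj; simp [h1]
            · simp [htj, h0 j t htj (by omega)]
          · intro b hb
            have : t ≠ b := by rintro rfl; simp at hb; omega
            simp [this]
      rw [e]
      refine Submodule.sub_mem _ ⟨_, rfl⟩ (Submodule.sum_mem _ ?_)
      intro b hb
      simp at hb
      exact Submodule.smul_mem _ _ (ih b (by omega))
  intro g
  have : g ∈ LinearMap.range Φ := by
    rw [pi_eq_sum_univ g]
    refine Submodule.sum_mem _ fun j _ => Submodule.smul_mem _ _ ?_
    convert key (ρ j + 1) j (by omega) using 1
    funext t
    simp [Pi.single_apply, eq_comm]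
  exact this

lemma mem_Wset (r i : ℕ) (l : List Bool) :
    l ∈ Wset r i ↔ l.length = r*i-1 ∧ ∀ j, r ∣ j+1 → l.getD j false = false := by
  unfold Wset
  simp only [Finset.mem_image, Finset.mem_filter, Finset.mem_univ, true_and]
  constructor
  · rintro ⟨s, hs, rfl⟩
    refine ⟨by simp, fun j hj => ?_⟩
    by_cases h : j < r*i-1
    · have := hs ⟨j, h⟩ hj
      simpa [List.getD_eq_getElem?_getD, h] using this
    · simp [List.getD_eq_getElem?_getD, h]
  · rintro ⟨hl, h⟩
    refine ⟨fun j => l.getD j false, fun j hj => h j hj, ?_⟩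
    apply List.ext_getElem
    · simp [hl]
    · intro k h1 h2
      simp [h2]

/-- Extension by zero of a function on words of length `m`. -/
def ext (m : ℕ) (f : Vec m → ZMod 2) (l : List Bool) : ZMod 2 :=
  if h : l.length = m then f ⟨l, h⟩ else 0

/-- Index set of the constraints. -/
abbrev Idx (r n : ℕ) : Type := Σ i : Fin ((n-1)/r), Vec (n - 1 - r*((i:ℕ)+1))

/-- The constraints. -/
noncomputable def Phi (r n : ℕ) :
    (Vec (n-1) → ZMod 2) →ₗ[ZMod 2] (Idx r n → ZMod 2) where
  toFun f j := (∑ w ∈ Wset r (j.1+1), ext (n-1) f (j.2.1 ++ [true] ++ w)) -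
    ∑ w ∈ Wset r (j.1+1), ext (n-1) f (j.2.1 ++ [false] ++ w)
  map_add' f g := by
    funext j
    have : ∀ l, ext (n-1) (f+g) l = ext (n-1) f l + ext (n-1) g l := by
      intro l; unfold ext; split_ifs <;> simp
    simp only [this, Finset.sum_add_distrib, Pi.add_apply]
    ring
  map_smul' c f := by
    funext j
    have : ∀ l, ext (n-1) (c • f) l = c * ext (n-1) f l := by
      intro l; unfold ext; split_ifs <;> simp
    simp only [this, ← Finset.mul_sum, Pi.smul_apply, smul_eq_mul, RingHom.id_apply]
    ring

lemma idx_le {r n : ℕ} (i : Fin ((n-1)/r)) : r * ((i:ℕ)+1) ≤ n - 1 := by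
  have h1 : (i:ℕ)+1 ≤ (n-1)/r := i.2
  calc r * ((i:ℕ)+1) ≤ r * ((n-1)/r) := Nat.mul_le_mul_left _ h1
    _ ≤ n-1 := Nat.mul_div_le _ _

/-- pivot word -/
def piv {r n : ℕ} (j : Idx r n) : List Bool :=
  j.2.1 ++ [true] ++ List.replicate (r*((j.1:ℕ)+1)-1) false

lemma piv_length {r n : ℕ} (hr : 1 ≤ r) (j : Idx r n) : (piv j).length = n - 1 := by
  have := idx_le j.1
  have h2 : 1 ≤ r * ((j.1:ℕ)+1) := Nat.mul_pos hr (by omega)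
  simp [piv, j.2.2]
  omega

/-- indicator of the pivot word -/
def pv {r n : ℕ} (j : Idx r n) : Vec (n-1) → ZMod 2 :=
  fun y => if y.1 = piv j then 1 else 0

lemma ext_pv {r n : ℕ} (hr : 1 ≤ r) (j : Idx r n) (l : List Bool) :
    ext (n-1) (pv j) l = if l = piv j then 1 else 0 := by
  unfold ext pv
  by_cases h : l.length = n-1
  · simp [h]
  · have : l ≠ piv j := by rintro rfl; exact h (piv_length hr j)
    simp [h, this]

lemma Phi_surj (r n : ℕ) (hr : 1 ≤ r) : Function.Surjective (Phi r n) := by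
  classical
  refine surj_of_tri (Phi r n) (fun j => j.1) pv ?_ ?_
  · intro j
    simp only [Phi, LinearMap.coe_mk, AddHom.coe_mk, ext_pv hr]
    rw [Finset.sum_eq_single (List.replicate (r*((j.1:ℕ)+1)-1) false), Finset.sum_eq_zero]
    · simp [piv]
    · intro w _
      simp [piv]
    · intro w _ hw
      simp [piv, hw]
    · intro h
      exfalso; apply h
      rw [mem_Wset]
      refine ⟨by simp, fun k _ => ?_⟩
      rw [List.getD_eq_getElem?_getD, List.getElem?_replicate]
      split_ifs <;> rfl
  · intro j j' hne hle
    simp only [Phi, LinearMap.coe_mk, AddHom.coe_mk, ext_pv hr]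
    have key : ∀ s : Bool, ∀ w ∈ Wset r (j'.1+1), j'.2.1 ++ [s] ++ w ≠ piv j := by
      intro s w hw he
      rw [mem_Wset] at hw
      have l1 := idx_le j.1
      have l2 := idx_le j'.1
      have hx : j.2.1.length = _ := j.2.2
      have hx' : j'.2.1.length = _ := j'.2.2
      obtain ⟨i, x⟩ := j
      obtain ⟨i', x'⟩ := j'
      simp only at *
      rcases Nat.lt_or_ge i i' with hlt | hge
      · obtain ⟨d, hd⟩ : ∃ d, (i':ℕ) = i + (d + 1) := ⟨i' - i - 1, by have : (i:ℕ) < i' := hlt; omega⟩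
        have e1 : r * ((i':ℕ)+1) = r * ((i:ℕ)+1) + r * (d+1) := by rw [hd]; ring
        have h2 : 1 ≤ r * (d+1) := Nat.mul_pos hr (by omega)
        have hz := hw.2 (r*(d+1)-1) (by rw [Nat.sub_add_cancel h2]; exact dvd_mul_right _ _)
        have he' := congrArg (fun l => l.getD (n-1-r*((i:ℕ)+1)) false) he
        simp only [piv, List.append_assoc, List.getD_eq_getElem?_getD] at he'
        rw [List.getElem?_append_right (by omega), List.getElem?_append_right (by simp; omega),
          List.getElem?_append_right (by omega)] at he'
        rw [hx, hx', List.length_singleton,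
          show n - 1 - r * ((i:ℕ)+1) - (n - 1 - r * ((i':ℕ)+1)) - 1 = r*(d+1)-1 by omega] at he'
        rw [List.getD_eq_getElem?_getD] at hz
        rw [hz] at he'
        simp at he'
      · have : i = i' := Fin.ext (by have : (i':ℕ) ≤ i := hge; omega)
        subst this
        apply hne
        simp only [piv, List.append_assoc] at he
        have := (List.append_inj he (by omega)).1
        congr 1
        exact Subtype.ext this
    rw [Finset.sum_eq_zero, Finset.sum_eq_zero, sub_zero]
    · intro w hw; simp only [key _ w hw, if_false]
    · intro w hw; simp only [key _ w hw, if_false]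

lemma card_ker (r n : ℕ) (hr : 1 ≤ r) :
    Nat.card (LinearMap.ker (Phi r n)) =
      2 ^ (2^(n-1) - ∑ i ∈ Finset.Icc 1 ((n-1)/r), 2^(n-1-i*r)) := by
  have h1 : Nat.card (LinearMap.ker (Phi r n)) * Nat.card (Idx r n → ZMod 2) =
      Nat.card (Vec (n-1) → ZMod 2) := by
    have e := (Phi r n).quotKerEquivOfSurjective (Phi_surj r n hr)
    rw [← Nat.card_congr e.toEquiv, mul_comm]
    exact (Submodule.card_eq_card_quotient_mul_card (LinearMap.ker (Phi r n))).symm.trans rfl |>.symm ▸ by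
      ring_nf
  have h2 : Nat.card (Vec (n-1) → ZMod 2) = 2^(2^(n-1)) := by
    simp [Nat.card_eq_fintype_card, card_Vec, ZMod.card]
  have h3 : Nat.card (Idx r n → ZMod 2) = 2^(∑ i ∈ Finset.Icc 1 ((n-1)/r), 2^(n-1-i*r)) := by
    have : Fintype.card (Idx r n) = ∑ i ∈ Finset.Icc 1 ((n-1)/r), 2^(n-1-i*r) := by
      rw [Fintype.card_sigma]
      simp only [card_Vec]
      rw [Fin.sum_univ_eq_sum_range (fun i => 2^(n-1-r*(i+1))) ((n-1)/r)]
      rw [Finset.range_eq_Ico, Finset.sum_Ico_add' (fun i => 2^(n-1-r*i)) 0 _ 1]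
      simp only [mul_comm r]
      rfl
    rw [Nat.card_eq_fintype_card, Fintype.card_fun, ZMod.card, this]
  rw [h2, h3] at h1
  have hle : ∑ i ∈ Finset.Icc 1 ((n-1)/r), 2^(n-1-i*r) ≤ 2^(n-1) := by
    have := Dvd.intro_left _ h1
    exact (Nat.pow_dvd_pow_iff_le_right (by norm_num)).1 this
  rw [← Nat.pow_div hle (by norm_num)]
  exact (Nat.div_eq_of_eq_mul_left (by positivity) h1.symm).symm

lemma cond_iff (r n : ℕ) (hr : 1 ≤ r) (σ : NodeN n → NodeN n)
    (f : Vec (n-1) → ZMod 2)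
    (hf : ∀ y, f y = (parN n σ y.1 : ZMod 2)) :
    (∀ i : ℕ, 1 ≤ i → i ≤ (n-1)/r → ∀ x : List Bool, x.length = n - 1 - r*i →
        Even ((∑ w ∈ Wset r i, (parN n σ (x ++ [true] ++ w) : ℤ)) -
          ∑ w ∈ Wset r i, (parN n σ (x ++ [false] ++ w) : ℤ))) ↔ f ∈ LinearMap.ker (Phi r n) := by
  have key : ∀ (j : Idx r n), Even ((∑ w ∈ Wset r (j.1+1), (parN n σ (j.2.1 ++ [true] ++ w) : ℤ)) -
          ∑ w ∈ Wset r (j.1+1), (parN n σ (j.2.1 ++ [false] ++ w) : ℤ)) ↔ Phi r n f j = 0 := by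
    intro j
    have hs : ∀ s : Bool, ∀ w ∈ Wset r (j.1+1),
        ext (n-1) f (j.2.1 ++ [s] ++ w) = (parN n σ (j.2.1 ++ [s] ++ w) : ZMod 2) := by
      intro s w hw
      have hl := ((mem_Wset _ _ _).1 hw).1
      have l1 := idx_le j.1
      have h2 : 1 ≤ r * ((j.1:ℕ)+1) := Nat.mul_pos hr (by omega)
      have hx : j.2.1.length = _ := j.2.2
      have : (j.2.1 ++ [s] ++ w).length = n-1 := by
        simp only [List.length_append, List.length_singleton]; omega
      rw [ext, dif_pos this, hf]
    simp only [Phi, LinearMap.coe_mk, AddHom.coe_mk]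
    rw [Finset.sum_congr rfl (hs true), Finset.sum_congr rfl (hs false),
      even_iff_two_dvd, ← Nat.cast_two (R := ℤ), ← ZMod.intCast_zmod_eq_zero_iff_dvd]
    push_cast
    rfl
  constructor
  · intro h
    rw [LinearMap.mem_ker]
    funext j
    exact (key j).1 (h (j.1+1) (by omega) j.1.2 j.2.1 j.2.2)
  · intro h i hi hi' x hx
    rw [LinearMap.mem_ker] at h
    obtain ⟨i, rfl⟩ : ∃ k, i = k+1 := ⟨i-1, by omega⟩
    exact (key ⟨⟨i, hi'⟩, ⟨x, hx⟩⟩).2 (congrFun h _)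

/-- The automorphism with given parities on level `n-1`, on lists. -/
def mkL (n : ℕ) (f : Vec (n-1) → ZMod 2) (w : List Bool) : List Bool :=
  if w.length = n ∧ 0 < n then
    w.dropLast ++ [xor (w.getLastD false) (decide (ext (n-1) f w.dropLast ≠ 0))]
  else w

lemma mkL_length (n : ℕ) (f) (w : List Bool) : (mkL n f w).length = w.length := by
  unfold mkL
  split_ifs with h
  · simp; omega
  · rfl

lemma mkL_fix (n : ℕ) (hn : 0 < n) (f) (w : List Bool) (h : w.length ≤ n-1) : mkL n f w = w := by
  rw [mkL, if_neg]; omega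

lemma mkL_last (n : ℕ) (f) (x : List Bool) (hx : x.length = n-1) (hn : 0 < n) (s : Bool) :
    mkL n f (x ++ [s]) = x ++ [xor s (decide (ext (n-1) f x ≠ 0))] := by
  rw [mkL, if_pos ⟨by simp; omega, hn⟩]
  simp

lemma mkL_invol (n : ℕ) (f) (w : List Bool) : mkL n f (mkL n f w) = w := by
  by_cases h : w.length = n ∧ 0 < n
  · obtain ⟨x, s, rfl⟩ : ∃ x s, w = x ++ [s] := by
      rcases List.eq_nil_or_concat w with h' | h'
      · subst h'; simp at h; omega
      · simpa using h'
    have hx : x.length = n-1 := by have := h.1; simp at this; omega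
    rw [mkL_last n f x hx h.2, mkL_last n f x hx h.2]
    simp
  · have e : mkL n f w = w := by rw [mkL, if_neg h]
    rw [e, e]

/-- The automorphism with given parities on level `n-1`. -/
def mk (n : ℕ) (f : Vec (n-1) → ZMod 2) (w : NodeN n) : NodeN n :=
  ⟨mkL n f w.1, (mkL_length n f w.1).trans_le w.2⟩

lemma mk_fix (n : ℕ) (hn : 0 < n) (f) (w : NodeN n) (h : w.1.length ≤ n-1) : mk n f w = w :=
  Subtype.ext (mkL_fix n hn f w.1 h)

lemma mk_invol (n : ℕ) (f) : Function.Involutive (mk n f) :=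
  fun w => Subtype.ext (mkL_invol n f w.1)

lemma mk_aut (n : ℕ) (hn : 0 < n) (f) : IsAutN n (mk n f) := by
  refine ⟨(mk_invol n f).bijective, fun w => mkL_length n f w.1, ?_⟩
  intro w hw s
  change ∃ t, mkL n f (w ++ [s]) = mkL n f w ++ [t]
  rw [mkL_fix n hn f w (by omega)]
  by_cases h : w.length = n-1
  · exact ⟨_, mkL_last n f w h hn s⟩
  · rw [mkL_fix n hn f (w ++ [s]) (by simp; omega)]
    exact ⟨s, rfl⟩

lemma mk_par (n : ℕ) (hn : 0 < n) (f) (y : Vec (n-1)) :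
    (parN n (mk n f) y.1 : ZMod 2) = f y := by
  obtain ⟨y, hy⟩ := y
  have hyn : y.length < n := by omega
  have e : parN n (mk n f) y = if mkL n f (y ++ [false]) = mkL n f y ++ [false] then 0 else 1 := by
    rw [parN, dif_pos hyn]
    rfl
  have e2 : ext (n-1) f y = f ⟨y, hy⟩ := by rw [ext, dif_pos hy]
  rw [e, mkL_last n f y hy hn, mkL_fix n hn f y (by omega), e2]
  generalize f ⟨y, hy⟩ = c
  have hc : c = 0 ∨ c = 1 := by revert c; decide
  rcases hc with rfl | rfl <;> simp

lemma aut_inj (n : ℕ) (hn : 0 < n) (σ τ : NodeN n → NodeN n) (hσ : IsAutN n σ) (hτ : IsAutN n τ)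
    (fσ : ∀ w : NodeN n, w.1.length ≤ n - 1 → σ w = w)
    (fτ : ∀ w : NodeN n, w.1.length ≤ n - 1 → τ w = w)
    (h : ∀ y : Vec (n-1), (parN n σ y.1 : ZMod 2) = parN n τ y.1) : σ = τ := by
  have form : ∀ σ : NodeN n → NodeN n, IsAutN n σ → (∀ w : NodeN n, w.1.length ≤ n - 1 → σ w = w) →
      ∀ (x : List Bool) (hx : x.length = n-1) (s : Bool) (hs : (x ++ [s]).length ≤ n),
      (σ ⟨x ++ [s], hs⟩).1 = x ++ [xor s (decide ((parN n σ x : ZMod 2) ≠ 0))] := by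
    intro σ hσ fσ x hx s hs
    have hxn : x.length < n := by omega
    have e := fσ ⟨x, hxn.le⟩ (by simp only; omega)
    obtain ⟨t0, h0⟩ := hσ.2.2 x hxn false
    obtain ⟨t1, h1⟩ := hσ.2.2 x hxn true
    have hne : t0 ≠ t1 := by
      rintro rfl
      have := hσ.1.1 (Subtype.ext (h0.trans h1.symm))
      have := congrArg Subtype.val this
      simp at this
    rw [e] at h0 h1
    have hp : parN n σ x = if t0 = false then 0 else 1 := by
      rw [parN, dif_pos hxn, e, h0]
      simp
    rw [hp]
    cases s
    · rw [h0]; cases t0 <;> simp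
    · rw [h1]; cases t0 <;> cases t1 <;> simp at hne ⊢
  funext w
  by_cases hw : w.1.length ≤ n-1
  · rw [fσ w hw, fτ w hw]
  · obtain ⟨w, hwn⟩ := w
    simp only at hw
    obtain ⟨x, s, rfl⟩ : ∃ x s, w = x ++ [s] := by
      rcases List.eq_nil_or_concat w with h' | h'
      · subst h'; simp at hw
      · simpa using h'
    have hx : x.length = n-1 := by simp at hw hwn; omega
    apply Subtype.ext
    rw [form σ hσ fσ x hx s, form τ hτ fτ x hx s, h ⟨x, hx⟩]

end CardS

/-- Fix `r ≥ 1` and `n ≥ r + 1`, and set `L := ⌊(n−1)/r⌋`. Let `S` be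
the set of automorphisms `σ` of `T_n` such that (i) `σ` fixes every word of length at
most `n−1`, and (ii) for every `i ∈ {1,…,L}` and every word `x` of length `n−1−ri`, the
integer `Σ_{w ∈ W(r,i)} Par(σ, xbw) − Σ_{w ∈ W(r,i)} Par(σ, xaw)` is even. Then `S` has
cardinality `2 ^ (2^{n−1} − Σ_{i=1}^{L} 2^{n−1−ir})`. -/
theorem card_S (r n : ℕ) (hr : 1 ≤ r) (hn : r + 1 ≤ n) :
    Nat.card {σ : NodeN n → NodeN n //
      IsAutN n σ ∧
      (∀ w : NodeN n, w.1.length ≤ n - 1 → σ w = w) ∧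
      (∀ i : ℕ, 1 ≤ i → i ≤ (n-1)/r → ∀ x : List Bool, x.length = n - 1 - r*i →
        Even ((∑ w ∈ Wset r i, (parN n σ (x ++ [true] ++ w) : ℤ)) -
          ∑ w ∈ Wset r i, (parN n σ (x ++ [false] ++ w) : ℤ)))} =
    2 ^ (2^(n-1) - ∑ i ∈ Finset.Icc 1 ((n-1)/r), 2^(n-1-i*r)) := by
  rw [← CardS.card_ker r n hr]
  have hn0 : 0 < n := by omega
  refine Nat.card_eq_of_bijective
    (fun σ => ⟨fun y => (parN n σ.1 y.1 : ZMod 2),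
      (CardS.cond_iff r n hr σ.1 _ (fun _ => rfl)).1 σ.2.2.2⟩) ⟨?_, ?_⟩
  · rintro ⟨σ, hσ, fσ, _⟩ ⟨τ, hτ, fτ, _⟩ h
    apply Subtype.ext
    have h' := congrArg Subtype.val h
    exact CardS.aut_inj n hn0 σ τ hσ hτ fσ fτ (fun y => congrFun h' y)
  · rintro ⟨f, hf⟩
    refine ⟨⟨CardS.mk n f, CardS.mk_aut n hn0 f, CardS.mk_fix n hn0 f,
      (CardS.cond_iff r n hr _ f (fun y => (CardS.mk_par n hn0 f y).symm)).2 hf⟩, ?_⟩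
    apply Subtype.ext
    funext y
    exact CardS.mk_par n hn0 f y
end
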